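/- arXiv:2001.11952 — 2 statements merged into one kernel-verified Lean document; each statement's English description precedes it below -/
import Mathlib

section
/- Let L, d, τ > 0. Assume f : [0,∞)² → ℝ is continuously differentiable with ∂f/∂u < 0 and ∂f/∂v < 0 everywhere on [0,∞)², and H : [0,∞) → ℝ is continuously differentiable with H(0) = 0 and H′(u) > 0 for all u ≥ 0. Let (u_d, v_d) be a positive classical solution of the one-dimensional steady-state system (52). Then (u_d, v_d) is non-degenerate: the only pair (φ, ψ) of C² functions on [0, L] satisfying the linearized system (53) is (φ, ψ) = (0, 0). -/
open Set

open Filter Topology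

namespace NegativeFeedback

/-- `y` is `C¹` on `[0, L]` with derivative `y'`, and `y'` has derivative `y''` on `(0, L)`. -/
structure IsTwiceDiff (L : ℝ) (y y' y'' : ℝ → ℝ) : Prop where
  deriv_fst : ∀ x ∈ Icc 0 L, HasDerivWithinAt y (y' x) (Icc 0 L) x
  cont_deriv : ContinuousOn y' (Icc 0 L)
  deriv_snd : ∀ x ∈ Ioo 0 L, HasDerivAt y' (y'' x) x

namespace IsTwiceDiff

variable {L : ℝ} {y y' y'' : ℝ → ℝ}

theorem cont (h : IsTwiceDiff L y y' y'') : ContinuousOn y (Icc 0 L) :=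
  fun x hx => (h.deriv_fst x hx).continuousWithinAt

theorem hasDerivAt (h : IsTwiceDiff L y y' y'') {x : ℝ} (hx : x ∈ Ioo 0 L) :
    HasDerivAt y (y' x) x :=
  (h.deriv_fst x (Ioo_subset_Icc_self hx)).hasDerivAt (Icc_mem_nhds hx.1 hx.2)

theorem neg (h : IsTwiceDiff L y y' y'') :
    IsTwiceDiff L (fun x => -y x) (fun x => -y' x) (fun x => -y'' x) :=
  ⟨fun x hx => (h.deriv_fst x hx).fun_neg, h.cont_deriv.neg,
    fun x hx => (h.deriv_snd x hx).fun_neg⟩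

theorem reflect (h : IsTwiceDiff L y y' y'') :
    IsTwiceDiff L (fun x => y (L - x)) (fun x => -y' (L - x)) (fun x => y'' (L - x)) := by
  have hmaps : MapsTo (fun x => L - x) (Icc 0 L) (Icc 0 L) :=
    fun x hx => ⟨by linarith [hx.2], by linarith [hx.1]⟩
  have hd : ∀ x : ℝ, HasDerivAt (fun x => L - x) (-1) x := fun x => by
    simpa using (hasDerivAt_id x).const_sub L
  refine ⟨fun x hx => ?_, (h.cont_deriv.comp (by fun_prop) hmaps).neg, fun x hx => ?_⟩
  · have := (h.deriv_fst (L - x) (hmaps hx)).comp x (hd x).hasDerivWithinAt hmaps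
    simpa [Function.comp_def] using this
  · have hx' : L - x ∈ Ioo 0 L := ⟨by linarith [hx.2], by linarith [hx.1]⟩
    have := ((h.deriv_snd (L - x) hx').comp x (hd x)).fun_neg
    simpa [Function.comp_def] using this

theorem of_contDiffOn (hL : 0 < L) (h : ContDiffOn ℝ 2 y (Icc 0 L)) :
    IsTwiceDiff L y (derivWithin y (Icc 0 L)) (deriv (deriv y)) := by
  have hU : UniqueDiffOn ℝ (Icc 0 L) := uniqueDiffOn_Icc hL
  have h1 : ContDiffOn ℝ 1 (derivWithin y (Icc 0 L)) (Icc 0 L) :=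
    h.derivWithin hU (by norm_num)
  refine ⟨fun x hx => (h.differentiableOn (by norm_num) x hx).hasDerivWithinAt,
    h1.continuousOn, fun x hx => ?_⟩
  have hn : Icc 0 L ∈ 𝓝 x := Icc_mem_nhds hx.1 hx.2
  have hd := ((h1.differentiableOn (by norm_num) x
    (Ioo_subset_Icc_self hx)).differentiableAt hn).hasDerivAt
  have he : derivWithin y (Icc 0 L) =ᶠ[𝓝 x] deriv y := by
    filter_upwards [Ioo_mem_nhds hx.1 hx.2] with z hz
    exact derivWithin_of_mem_nhds (Icc_mem_nhds hz.1 hz.2)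
  rwa [he.deriv_eq] at hd

end IsTwiceDiff

theorem deriv_nonneg_of_left_end {g : ℝ → ℝ} {g' a b : ℝ} (hab : a < b)
    (h : HasDerivWithinAt g g' (Icc a b) a) (ha : g a = 0) (hg : ∀ x ∈ Ioo a b, 0 < g x) :
    0 ≤ g' := by
  have h1 : HasDerivWithinAt g g' (Ioo a b) a := h.mono Ioo_subset_Icc_self
  rw [hasDerivWithinAt_iff_tendsto_slope' (by simp), nhdsWithin_Ioo_eq_nhdsGT hab] at h1
  refine ge_of_tendsto h1 ?_
  filter_upwards [Ioo_mem_nhdsGT hab] with x hx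
  rw [slope_def_field, ha, sub_zero]
  exact div_nonneg (hg x hx).le (by linarith [hx.1])

theorem deriv_nonpos_of_right_end {g : ℝ → ℝ} {g' a b : ℝ} (hab : a < b)
    (h : HasDerivWithinAt g g' (Icc a b) b) (hb : g b = 0) (hg : ∀ x ∈ Ioo a b, 0 < g x) :
    g' ≤ 0 := by
  have h1 : HasDerivWithinAt g g' (Ioo a b) b := h.mono Ioo_subset_Icc_self
  rw [hasDerivWithinAt_iff_tendsto_slope' (by simp), nhdsWithin_Ioo_eq_nhdsLT hab] at h1
  refine le_of_tendsto h1 ?_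
  filter_upwards [Ioo_mem_nhdsLT hab] with x hx
  rw [slope_def_field, hb, sub_zero]
  exact div_nonpos_of_nonneg_of_nonpos (hg x hx).le (by linarith [hx.2])

theorem eventually_neg_right {g : ℝ → ℝ} {g' a : ℝ} (h : HasDerivAt g g' a) (ha : g a = 0)
    (hg : g' < 0) : ∀ᶠ x in 𝓝[>] a, g x < 0 := by
  have h1 := hasDerivAt_iff_tendsto_slope.1 h
  have h2 : ∀ᶠ x in 𝓝[>] a, slope g a x < 0 :=
    (h1.mono_left (nhdsWithin_mono _ fun x (hx : a < x) => hx.ne')).eventually (gt_mem_nhds hg)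
  filter_upwards [h2, self_mem_nhdsWithin] with x hx hxa
  rw [slope_def_field, ha, sub_zero] at hx
  have : 0 < x - a := sub_pos.2 hxa
  by_contra! hcon
  exact absurd hx (not_lt.2 (div_nonneg hcon this.le))

theorem exists_zero_right {g : ℝ → ℝ} {x r : ℝ} (hxr : x ≤ r) (hg : ContinuousOn g (Icc x r))
    (hx : 0 < g x) (hr : g r = 0) :
    ∃ b ∈ Ioc x r, g b = 0 ∧ ∀ z ∈ Ico x b, 0 < g z := by
  have hc : IsCompact (Icc x r ∩ g ⁻¹' Iic 0) :=
    isCompact_Icc.of_isClosed_subset (hg.preimage_isClosed_of_isClosed isClosed_Icc isClosed_Iic)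
      inter_subset_left
  obtain ⟨b, ⟨hb, hb0⟩, hmin⟩ := hc.exists_isLeast ⟨r, ⟨hxr, le_rfl⟩, hr.le⟩
  obtain ⟨z, hz, hz0⟩ := intermediate_value_Icc' hb.1 (hg.mono (Icc_subset_Icc_right hb.2))
    (show (0 : ℝ) ∈ Icc (g b) (g x) from ⟨hb0, hx.le⟩)
  have hzb : z = b := le_antisymm hz.2 (hmin ⟨⟨hz.1, hz.2.trans hb.2⟩, hz0.le⟩)
  subst hzb
  refine ⟨z, ⟨lt_of_le_of_ne hb.1 ?_, hb.2⟩, hz0, fun w hw => ?_⟩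
  · rintro rfl
    exact hx.ne' hz0
  · by_contra! hcon
    exact absurd (hmin ⟨⟨hw.1, hw.2.le.trans hb.2⟩, hcon⟩) (not_le.2 hw.2)

theorem exists_zero_left {g : ℝ → ℝ} {x l : ℝ} (hlx : l ≤ x) (hg : ContinuousOn g (Icc l x))
    (hx : 0 < g x) (hl : g l = 0) :
    ∃ a ∈ Ico l x, g a = 0 ∧ ∀ z ∈ Ioc a x, 0 < g z := by
  have hmaps : MapsTo (fun z : ℝ => -z) (Icc (-x) (-l)) (Icc l x) :=
    fun z hz => ⟨by linarith [hz.2], by linarith [hz.1]⟩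
  obtain ⟨b, hb, hb0, hpos⟩ := exists_zero_right (g := fun z => g (-z)) (neg_le_neg hlx)
    (hg.comp (by fun_prop) hmaps) (by simpa using hx) (by simpa using hl)
  refine ⟨-b, ⟨by linarith [hb.2], by linarith [hb.1]⟩, hb0, fun z hz => ?_⟩
  simpa using hpos (-z) ⟨by linarith [hz.2], by linarith [hz.1]⟩

theorem zero_of_frequently_zero_left {g : ℝ → ℝ} {g' L s : ℝ} (hs : s ∈ Ioc 0 L)
    (h : HasDerivWithinAt g g' (Icc 0 L) s) (hz : ∃ᶠ x in 𝓝[<] s, g x = 0) :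
    g s = 0 ∧ g' = 0 := by
  have h1 : HasDerivWithinAt g g' (Ioo 0 s) s :=
    h.mono fun x hx => ⟨hx.1.le, hx.2.le.trans hs.2⟩
  have hc := h1.continuousWithinAt
  rw [ContinuousWithinAt, nhdsWithin_Ioo_eq_nhdsLT hs.1] at hc
  have h0 : g s = 0 := tendsto_nhds_unique_of_frequently_eq hc tendsto_const_nhds hz
  rw [hasDerivWithinAt_iff_tendsto_slope' (by simp), nhdsWithin_Ioo_eq_nhdsLT hs.1] at h1
  refine ⟨h0, tendsto_nhds_unique_of_frequently_eq h1 tendsto_const_nhds (hz.mono fun x hx => ?_)⟩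
  rw [slope_def_field, h0, hx, sub_zero, zero_div]

/-- A linear pair `φ'' = p φ + a ψ`, `ψ'' = k ψ - b φ` under Dirichlet conditions on `[0, L]`, where
`u > 0` solves `u'' = (p - c) u` with `c > 0`. -/
structure System (L k : ℝ) (u u' φ φ' ψ ψ' p a b c : ℝ → ℝ) : Prop where
  length_pos : 0 < L
  k_pos : 0 < k
  a_pos : ∀ x ∈ Ioo 0 L, 0 < a x
  b_pos : ∀ x ∈ Ioo 0 L, 0 < b x
  c_pos : ∀ x ∈ Ioo 0 L, 0 < c x
  bdd : ∃ M, ∀ x ∈ Ioo 0 L, |p x| ≤ M ∧ |a x| ≤ M ∧ |b x| ≤ M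
  u_pos : ∀ x ∈ Ioo 0 L, 0 < u x
  u_eq : IsTwiceDiff L u u' fun x => (p x - c x) * u x
  φ_eq : IsTwiceDiff L φ φ' fun x => p x * φ x + a x * ψ x
  ψ_eq : IsTwiceDiff L ψ ψ' fun x => k * ψ x - b x * φ x
  u_zero : u 0 = 0
  u_length : u L = 0
  φ_zero : φ 0 = 0
  φ_length : φ L = 0
  ψ_zero : ψ 0 = 0
  ψ_length : ψ L = 0

namespace System

variable {L k : ℝ} {u u' φ φ' ψ ψ' p a b c : ℝ → ℝ}

theorem neg (S : System L k u u' φ φ' ψ ψ' p a b c) :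
    System L k u u' (fun x => -φ x) (fun x => -φ' x) (fun x => -ψ x) (fun x => -ψ' x) p a b c where
  __ := S
  φ_eq := by
    convert S.φ_eq.neg using 2
    ring
  ψ_eq := by
    convert S.ψ_eq.neg using 2
    ring
  φ_zero := by simp [S.φ_zero]
  φ_length := by simp [S.φ_length]
  ψ_zero := by simp [S.ψ_zero]
  ψ_length := by simp [S.ψ_length]

theorem reflect (S : System L k u u' φ φ' ψ ψ' p a b c) :
    System L k (fun x => u (L - x)) (fun x => -u' (L - x)) (fun x => φ (L - x))
      (fun x => -φ' (L - x)) (fun x => ψ (L - x)) (fun x => -ψ' (L - x)) (fun x => p (L - x))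
      (fun x => a (L - x)) (fun x => b (L - x)) (fun x => c (L - x)) := by
  have hm : ∀ x ∈ Ioo 0 L, L - x ∈ Ioo 0 L :=
    fun x hx => ⟨by linarith [hx.2], by linarith [hx.1]⟩
  obtain ⟨M, hM⟩ := S.bdd
  exact
    { length_pos := S.length_pos
      k_pos := S.k_pos
      a_pos := fun x hx => S.a_pos _ (hm x hx)
      b_pos := fun x hx => S.b_pos _ (hm x hx)
      c_pos := fun x hx => S.c_pos _ (hm x hx)
      bdd := ⟨M, fun x hx => hM _ (hm x hx)⟩
      u_pos := fun x hx => S.u_pos _ (hm x hx)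
      u_eq := S.u_eq.reflect
      φ_eq := S.φ_eq.reflect
      ψ_eq := S.ψ_eq.reflect
      u_zero := by simp [S.u_length]
      u_length := by simp [S.u_zero]
      φ_zero := by simp [S.φ_length]
      φ_length := by simp [S.φ_zero]
      ψ_zero := by simp [S.ψ_length]
      ψ_length := by simp [S.ψ_zero] }

theorem u_nonneg (S : System L k u u' φ φ' ψ ψ' p a b c) {x : ℝ} (hx : x ∈ Icc 0 L) :
    0 ≤ u x := by
  rcases eq_endpoints_or_mem_Ioo_of_mem_Icc hx with rfl | rfl | h
  · exact S.u_zero.ge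
  · exact S.u_length.ge
  · exact (S.u_pos x h).le

/-- The Wronskian of `φ` and `u` would be strictly increasing if `ψ ≥ 0` on a positive nodal
interval of `φ`. -/
theorem exists_neg_of_nodal (S : System L k u u' φ φ' ψ ψ' p a b c) {α β : ℝ} (hα : 0 ≤ α)
    (hαβ : α < β) (hβ : β ≤ L) (hφα : φ α = 0) (hφβ : φ β = 0)
    (hpos : ∀ x ∈ Ioo α β, 0 < φ x) : ∃ x ∈ Ioo α β, ψ x < 0 := by
  by_contra! hψ
  have hsub : Icc α β ⊆ Icc 0 L := Icc_subset_Icc hα hβ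
  have hsubo : Ioo α β ⊆ Ioo 0 L := Ioo_subset_Ioo hα hβ
  have hmα : α ∈ Icc α β := left_mem_Icc.2 hαβ.le
  have hmβ : β ∈ Icc α β := right_mem_Icc.2 hαβ.le
  have hmono : StrictMonoOn (fun x => φ' x * u x - φ x * u' x) (Icc α β) := by
    refine strictMonoOn_of_deriv_pos (convex_Icc α β) ?_ fun x hx => ?_
    · exact ((S.φ_eq.cont_deriv.mul S.u_eq.cont).sub (S.φ_eq.cont.mul S.u_eq.cont_deriv)).mono hsub
    · rw [interior_Icc] at hx
      have hx' := hsubo hx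
      have hd := ((S.φ_eq.deriv_snd x hx').fun_mul (S.u_eq.hasDerivAt hx')).fun_sub
        ((S.φ_eq.hasDerivAt hx').fun_mul (S.u_eq.deriv_snd x hx'))
      rw [hd.deriv]
      have h1 : 0 < c x * φ x * u x :=
        mul_pos (mul_pos (S.c_pos x hx') (hpos x hx)) (S.u_pos x hx')
      have h2 : 0 ≤ a x * ψ x * u x :=
        mul_nonneg (mul_nonneg (S.a_pos x hx').le (hψ x hx)) (S.u_pos x hx').le
      linarith
  have hlt := hmono hmα hmβ hαβ
  have h1 := deriv_nonneg_of_left_end hαβ ((S.φ_eq.deriv_fst α (hsub hmα)).mono hsub) hφα hpos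
  have h2 := deriv_nonpos_of_right_end hαβ ((S.φ_eq.deriv_fst β (hsub hmβ)).mono hsub) hφβ hpos
  have h3 := mul_nonneg h1 (S.u_nonneg (hsub hmα))
  have h4 := mul_nonpos_of_nonpos_of_nonneg h2 (S.u_nonneg (hsub hmβ))
  simp only [hφα, hφβ, zero_mul, sub_zero] at hlt
  linarith

theorem ψ_nonneg (S : System L k u u' φ φ' ψ ψ' p a b c) {α β : ℝ} (hα : 0 ≤ α)
    (hαβ : α ≤ β) (hβ : β ≤ L) (hψα : 0 ≤ ψ α) (hψβ : 0 ≤ ψ β)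
    (hφ : ∀ x ∈ Ioo α β, 0 ≤ φ x) : ∀ x ∈ Icc α β, 0 ≤ ψ x := by
  have hsub : Icc α β ⊆ Icc 0 L := Icc_subset_Icc hα hβ
  obtain ⟨m, hm, hmin⟩ := isCompact_Icc.exists_isMinOn (nonempty_Icc.2 hαβ)
    (S.ψ_eq.cont.mono hsub)
  by_contra! hcon
  obtain ⟨x, hx, hx0⟩ := hcon
  have hm0 : ψ m < 0 := (hmin hx).trans_lt hx0
  have hmo : m ∈ Ioo α β := by
    rcases eq_endpoints_or_mem_Ioo_of_mem_Icc hm with rfl | rfl | h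
    · linarith
    · linarith
    · exact h
  have hmL : m ∈ Ioo 0 L := Ioo_subset_Ioo hα hβ hmo
  have hloc : IsLocalMin ψ m := hmin.isLocalMin (Icc_mem_nhds hmo.1 hmo.2)
  have hd0 : ψ' m = 0 := hloc.hasDerivAt_eq_zero (S.ψ_eq.hasDerivAt hmL)
  have hneg : k * ψ m - b m * φ m < 0 := by
    have h1 := mul_neg_of_pos_of_neg S.k_pos hm0
    have h2 := mul_nonneg (S.b_pos m hmL).le (hφ m hmo)
    linarith
  have hev := eventually_neg_right (S.ψ_eq.deriv_snd m hmL) hd0 hneg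
  obtain ⟨r, hr, hrneg⟩ := (mem_nhdsGT_iff_exists_Ioo_subset' hmo.2).1
    (inter_mem hev (Ioo_mem_nhdsGT hmo.2))
  have hr' : m < r := hr
  set z := (m + r) / 2 with hz
  have hmz : m < z := by linarith
  have hzr : z < r := by linarith
  have hanti : StrictAntiOn ψ (Icc m z) := by
    refine strictAntiOn_of_deriv_neg (convex_Icc m z) (S.ψ_eq.cont.mono fun w hw => ?_)
      fun w hw => ?_
    · exact ⟨by linarith [hmL.1, hw.1], by linarith [(hrneg ⟨hmz, hzr⟩).2.2, hw.2]⟩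
    · rw [interior_Icc] at hw
      have hw' := hrneg ⟨hw.1, hw.2.trans hzr⟩
      rw [(S.ψ_eq.hasDerivAt ⟨by linarith [hmL.1, hw.1], by linarith [hw'.2.2]⟩).deriv]
      exact hw'.1
  have := hanti (left_mem_Icc.2 hmz.le) (right_mem_Icc.2 hmz.le) hmz
  have hzm := (hrneg ⟨hmz, hzr⟩).2
  have h3 : ψ m ≤ ψ z := hmin ⟨by linarith [hm.1], hzm.2.le⟩
  linarith

theorem neg_at_end_of_nodal (S : System L k u u' φ φ' ψ ψ' p a b c) {α β : ℝ} (hα : 0 ≤ α)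
    (hαβ : α < β) (hβ : β ≤ L) (hφα : φ α = 0) (hφβ : φ β = 0)
    (hpos : ∀ x ∈ Ioo α β, 0 < φ x) : ψ α < 0 ∨ ψ β < 0 := by
  by_contra! hcon
  obtain ⟨x, hx, hx0⟩ := S.exists_neg_of_nodal hα hαβ hβ hφα hφβ hpos
  exact hx0.not_ge (S.ψ_nonneg hα hαβ.le hβ hcon.1 hcon.2 (fun x hx => (hpos x hx).le) x
    (Ioo_subset_Icc_self hx))

theorem exists_φ_neg_right (S : System L k u u' φ φ' ψ ψ' p a b c) {β : ℝ} (hβ : β ∈ Ioo 0 L)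
    (hφ : φ β = 0) (hψ : ψ β < 0) (hφ' : φ' β ≤ 0) :
    ∃ y ∈ Ioo β L, ∀ x ∈ Ioc β y, φ x < 0 := by
  have key : ∀ {P : ℝ → Prop}, (∀ᶠ x in 𝓝[>] β, P x) → ∃ y ∈ Ioo β L, ∀ x ∈ Ioc β y, P x := by
    intro P hP
    obtain ⟨r, hr, hrP⟩ := (mem_nhdsGT_iff_exists_Ioo_subset' hβ.2).1
      (inter_mem hP (Ioo_mem_nhdsGT hβ.2))
    have hr' : β < r := hr
    have hy : (β + r) / 2 ∈ Ioo β r := ⟨by linarith, by linarith⟩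
    exact ⟨_, (hrP hy).2, fun x hx => (hrP ⟨hx.1, hx.2.trans_lt hy.2⟩).1⟩
  rcases hφ'.lt_or_eq with h | h
  · exact key (eventually_neg_right (S.φ_eq.hasDerivAt hβ) hφ h)
  · have hneg : p β * φ β + a β * ψ β < 0 := by
      rw [hφ, mul_zero, zero_add]
      exact mul_neg_of_pos_of_neg (S.a_pos β hβ) hψ
    obtain ⟨y, hy, hyP⟩ := key (eventually_neg_right (S.φ_eq.deriv_snd β hβ) h hneg)
    have hanti : StrictAntiOn φ (Icc β y) := by
      refine strictAntiOn_of_deriv_neg (convex_Icc β y)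
        (S.φ_eq.cont.mono (Icc_subset_Icc hβ.1.le hy.2.le)) fun w hw => ?_
      rw [interior_Icc] at hw
      rw [(S.φ_eq.hasDerivAt ⟨hβ.1.trans hw.1, hw.2.trans hy.2⟩).deriv]
      exact hyP w ⟨hw.1, hw.2.le⟩
    refine ⟨y, hy, fun x hx => ?_⟩
    rw [← hφ]
    exact hanti (left_mem_Icc.2 hy.1.le) ⟨hx.1.le, hx.2⟩ hx.1

theorem exists_next_zero (S : System L k u u' φ φ' ψ ψ' p a b c) {β : ℝ} (hβ : β ∈ Ioo 0 L)
    (hφ : φ β = 0) (hψ : ψ β < 0) (hφ' : φ' β ≤ 0) :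
    ∃ γ ∈ Ioo β L, φ γ = 0 ∧ 0 < ψ γ ∧ 0 ≤ φ' γ := by
  obtain ⟨y, hy, hneg⟩ := S.exists_φ_neg_right hβ hφ hψ hφ'
  have hy0 : 0 < y := hβ.1.trans hy.1
  obtain ⟨γ, hγ, hγ0, hγpos⟩ := exists_zero_right hy.2.le
    (S.neg.φ_eq.cont.mono (Icc_subset_Icc_left hy0.le))
    (neg_pos.2 (hneg y ⟨hy.1, le_rfl⟩)) S.neg.φ_length
  have hβγ : β < γ := hy.1.trans hγ.1
  have hpos : ∀ x ∈ Ioo β γ, 0 < -φ x := fun x hx => by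
    rcases le_or_gt x y with h | h
    · exact neg_pos.2 (hneg x ⟨hx.1, h⟩)
    · exact hγpos x ⟨h.le, hx.2⟩
  have hψγ : 0 < ψ γ := by
    rcases S.neg.neg_at_end_of_nodal hβ.1.le hβγ hγ.2 (by simp [hφ]) hγ0 hpos with h | h
    · linarith
    · linarith
  have hsub : Icc β γ ⊆ Icc 0 L := Icc_subset_Icc hβ.1.le hγ.2
  have hd := deriv_nonpos_of_right_end hβγ
    ((S.neg.φ_eq.deriv_fst γ (hsub (right_mem_Icc.2 hβγ.le))).mono hsub) hγ0 hpos
  refine ⟨γ, ⟨hβγ, lt_of_le_of_ne hγ.2 ?_⟩, neg_eq_zero.1 hγ0, hψγ, by linarith⟩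
  rintro rfl
  exact hψγ.ne' S.ψ_length

/-- Uniqueness for the initial value problem, through the energy `φ² + φ'² + ψ² + ψ'²`. -/
theorem ψ_eq_zero_of_initial (S : System L k u u' φ φ' ψ ψ' p a b c) {s : ℝ} (hs : s ∈ Icc 0 L)
    (h1 : φ s = 0) (h2 : φ' s = 0) (h3 : ψ s = 0) (h4 : ψ' s = 0) :
    ∀ x ∈ Icc 0 s, ψ x = 0 := by
  obtain ⟨M, hM⟩ := S.bdd
  set N := max M k
  set E : ℝ → ℝ := fun x => φ x * φ x + φ' x * φ' x + (ψ x * ψ x + ψ' x * ψ' x) with hE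
  set K : ℝ := 2 + 4 * N
  have hcont : ContinuousOn E (Icc 0 L) :=
    ((S.φ_eq.cont.mul S.φ_eq.cont).add (S.φ_eq.cont_deriv.mul S.φ_eq.cont_deriv)).add
      ((S.ψ_eq.cont.mul S.ψ_eq.cont).add (S.ψ_eq.cont_deriv.mul S.ψ_eq.cont_deriv))
  have hmono : MonotoneOn (fun x => Real.exp (K * x) * E x) (Icc 0 L) := by
    have hd : ∀ x ∈ Ioo 0 L, ∃ e, HasDerivAt (fun x => Real.exp (K * x) * E x) e x ∧ 0 ≤ e := by
      intro x hx
      have e1 := S.φ_eq.hasDerivAt hx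
      have e2 := S.φ_eq.deriv_snd x hx
      have e3 := S.ψ_eq.hasDerivAt hx
      have e4 := S.ψ_eq.deriv_snd x hx
      have hexp : HasDerivAt (fun x => Real.exp (K * x)) (Real.exp (K * x) * K) x := by
        simpa using ((hasDerivAt_id x).const_mul K).exp
      refine ⟨_, hexp.fun_mul (((e1.fun_mul e1).fun_add (e2.fun_mul e2)).fun_add
        ((e3.fun_mul e3).fun_add (e4.fun_mul e4))), ?_⟩
      have cross : ∀ {q r t : ℝ}, |q| ≤ N → -(N * (r * r + t * t)) ≤ 2 * (q * (r * t)) := by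
        intro q r t hq
        have hN : 0 ≤ N := (abs_nonneg q).trans hq
        obtain ⟨hq1, hq2⟩ := abs_le.1 hq
        nlinarith [mul_nonneg (sub_nonneg.2 hq2) (sq_nonneg (r - t)),
          mul_nonneg (by linarith : 0 ≤ N + q) (sq_nonneg (r + t))]
      obtain ⟨hp, ha, hb⟩ := hM x hx
      have b1 := cross (r := φ' x) (t := φ x) (hp.trans (le_max_left M k))
      have b2 := cross (r := φ' x) (t := ψ x) (ha.trans (le_max_left M k))
      have b3 := cross (q := k) (r := ψ' x) (t := ψ x)
        ((abs_of_pos S.k_pos).le.trans (le_max_right M k))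
      have b4 := cross (q := -b x) (r := ψ' x) (t := φ x)
        ((abs_neg (b x)).le.trans (hb.trans (le_max_left M k)))
      have hN : 0 ≤ N := S.k_pos.le.trans (le_max_right M k)
      have key : 0 ≤ K * E x + (φ' x * φ x + φ x * φ' x +
          ((p x * φ x + a x * ψ x) * φ' x + φ' x * (p x * φ x + a x * ψ x)) +
          (ψ' x * ψ x + ψ x * ψ' x +
          ((k * ψ x - b x * φ x) * ψ' x + ψ' x * (k * ψ x - b x * φ x)))) := by
        have n1 := mul_nonneg hN (mul_self_nonneg (φ x))
        have n2 := mul_nonneg hN (mul_self_nonneg (φ' x))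
        have n3 := mul_nonneg hN (mul_self_nonneg (ψ x))
        have n4 := mul_nonneg hN (mul_self_nonneg (ψ' x))
        simp only [hE, K]
        nlinarith [mul_self_nonneg (φ x + φ' x), mul_self_nonneg (ψ x + ψ' x),
          mul_self_nonneg (φ x), mul_self_nonneg (φ' x), mul_self_nonneg (ψ x),
          mul_self_nonneg (ψ' x)]
      have := mul_nonneg (Real.exp_pos (K * x)).le key
      linarith
    refine monotoneOn_of_deriv_nonneg (convex_Icc 0 L)
      ((Continuous.continuousOn (by fun_prop)).mul hcont) (fun x hx => ?_) fun x hx => ?_ <;>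
    · rw [interior_Icc] at hx
      obtain ⟨e, he, he0⟩ := hd x hx
      first
        | exact he.differentiableAt.differentiableWithinAt
        | rwa [he.deriv]
  intro x hx
  have hle : Real.exp (K * x) * E x ≤ Real.exp (K * s) * E s :=
    hmono ⟨hx.1, hx.2.trans hs.2⟩ hs hx.2
  have hEs : E s = 0 := by simp [hE, h1, h2, h3, h4]
  rw [hEs, mul_zero] at hle
  have hEx : E x ≤ 0 := nonpos_of_mul_nonpos_right hle (Real.exp_pos _)
  simp only [hE] at hEx
  refine mul_self_eq_zero.1 (le_antisymm ?_ (mul_self_nonneg (ψ x)))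
  linarith [mul_self_nonneg (φ' x), mul_self_nonneg (ψ' x), mul_self_nonneg (φ x)]

/-- A zero of `φ` where `ψ ≠ 0` and `φ'` does not have the sign opposite to `ψ` starts an infinite
increasing sequence of such zeros; at their limit all Cauchy data vanish. -/
theorem false_of_zero (S : System L k u u' φ φ' ψ ψ' p a b c) {β : ℝ} (hβ : β ∈ Ioo 0 L)
    (hφ : φ β = 0) (hψ : ψ β ≠ 0) (hφ' : 0 ≤ φ' β * ψ β) : False := by
  set G : Set ℝ := {x | x ∈ Ioo 0 L ∧ φ x = 0 ∧ ψ x ≠ 0 ∧ 0 ≤ φ' x * ψ x} with hG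
  have hstep : ∀ x ∈ G, ∃ y ∈ G, x < y ∧ ∃ z ∈ Ioo x y, ψ z = 0 := by
    rintro x ⟨hx, hx0, hxψ, hxφ⟩
    rcases hxψ.lt_or_gt with h | h
    · obtain ⟨γ, hγ, g1, g2, g3⟩ := S.exists_next_zero hx hx0 h
        (nonpos_of_mul_nonneg_left hxφ h)
      refine ⟨γ, ⟨⟨hx.1.trans hγ.1, hγ.2⟩, g1, g2.ne', mul_nonneg g3 g2.le⟩, hγ.1, ?_⟩
      exact intermediate_value_Ioo hγ.1.le (S.ψ_eq.cont.mono (Icc_subset_Icc hx.1.le hγ.2.le))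
        ⟨h, g2⟩
    · obtain ⟨γ, hγ, g1, g2, g3⟩ := S.neg.exists_next_zero hx (by simp [hx0]) (neg_neg_of_pos h)
        (neg_nonpos.2 (nonneg_of_mul_nonneg_left hxφ h))
      have g1' : φ γ = 0 := neg_eq_zero.1 g1
      have g2' : ψ γ < 0 := neg_pos.1 g2
      refine ⟨γ, ⟨⟨hx.1.trans hγ.1, hγ.2⟩, g1', g2'.ne,
        mul_nonneg_of_nonpos_of_nonpos (by linarith) g2'.le⟩, hγ.1, ?_⟩
      exact intermediate_value_Ioo' hγ.1.le (S.ψ_eq.cont.mono (Icc_subset_Icc hx.1.le hγ.2.le))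
        ⟨g2', h⟩
  have hβG : β ∈ G := ⟨hβ, hφ, hψ, hφ'⟩
  have hbdd : BddAbove G := ⟨L, fun x hx => hx.1.2.le⟩
  set s := sSup G
  have hlt : ∀ x ∈ G, x < s := fun x hx => by
    obtain ⟨y, hy, hxy, -⟩ := hstep x hx
    exact hxy.trans_le (le_csSup hbdd hy)
  have hs : s ∈ Ioc 0 L :=
    ⟨hβ.1.trans (hlt β hβG), csSup_le ⟨β, hβG⟩ fun x hx => hx.1.2.le⟩
  have hfreq : ∀ g : ℝ → ℝ, (∀ x ∈ G, ∃ z ∈ Ico x s, g z = 0) → ∃ᶠ x in 𝓝[<] s, g x = 0 := by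
    intro g hg hev
    obtain ⟨l, hl, hlP⟩ := (mem_nhdsLT_iff_exists_Ioo_subset' hs.1).1 hev
    obtain ⟨x, hx, hlx⟩ := exists_lt_of_lt_csSup ⟨β, hβG⟩ (show l < s from hl)
    obtain ⟨z, hz, hz0⟩ := hg x hx
    exact hlP ⟨hlx.trans_le hz.1, hz.2⟩ hz0
  have hsI : s ∈ Icc 0 L := Ioc_subset_Icc_self hs
  obtain ⟨z1, z2⟩ := zero_of_frequently_zero_left hs (S.φ_eq.deriv_fst s hsI)
    (hfreq φ fun x hx => ⟨x, ⟨le_rfl, hlt x hx⟩, hx.2.1⟩)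
  obtain ⟨z3, z4⟩ := zero_of_frequently_zero_left hs (S.ψ_eq.deriv_fst s hsI)
    (hfreq ψ fun x hx => by
      obtain ⟨y, hy, -, z, hz, hz0⟩ := hstep x hx
      exact ⟨z, ⟨hz.1.le, hz.2.trans (hlt y hy)⟩, hz0⟩)
  exact hψ (S.ψ_eq_zero_of_initial hsI z1 z2 z3 z4 β ⟨hβ.1.le, (hlt β hβG).le⟩)

theorem φ_nonpos (S : System L k u u' φ φ' ψ ψ' p a b c) : ∀ x ∈ Icc 0 L, φ x ≤ 0 := by
  by_contra! hcon
  obtain ⟨x, hx, hx0⟩ := hcon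
  obtain ⟨β, hβ, hβ0, hβpos⟩ := exists_zero_right hx.2
    (S.φ_eq.cont.mono (Icc_subset_Icc_left hx.1)) hx0 S.φ_length
  obtain ⟨α, hα, hα0, hαpos⟩ := exists_zero_left hx.1
    (S.φ_eq.cont.mono (Icc_subset_Icc_right hx.2)) hx0 S.φ_zero
  have hαβ : α < β := hα.2.trans hβ.1
  have hpos : ∀ z ∈ Ioo α β, 0 < φ z := fun z hz => by
    rcases le_total z x with h | h
    · exact hαpos z ⟨hz.1, h⟩
    · exact hβpos z ⟨h, hz.2⟩
  have hsub : Icc α β ⊆ Icc 0 L := Icc_subset_Icc hα.1 hβ.2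
  rcases S.neg_at_end_of_nodal hα.1 hαβ hβ.2 hα0 hβ0 hpos with h | h
  · have hd := deriv_nonneg_of_left_end hαβ
      ((S.φ_eq.deriv_fst α (hsub (left_mem_Icc.2 hαβ.le))).mono hsub) hα0 hpos
    have hα' : 0 < α := lt_of_le_of_ne hα.1 (by rintro rfl; exact h.ne S.ψ_zero)
    have hαL : α < L := hαβ.trans_le hβ.2
    refine S.reflect.false_of_zero (β := L - α) ⟨by linarith, by linarith⟩ ?_ ?_ ?_ <;>
      simp only [sub_sub_cancel]
    · exact hα0
    · exact h.ne
    · exact mul_nonneg_of_nonpos_of_nonpos (by linarith) h.le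
  · have hd := deriv_nonpos_of_right_end hαβ
      ((S.φ_eq.deriv_fst β (hsub (right_mem_Icc.2 hαβ.le))).mono hsub) hβ0 hpos
    have hβL : β < L := lt_of_le_of_ne hβ.2 (by rintro rfl; exact h.ne S.ψ_length)
    exact S.false_of_zero ⟨hα.1.trans_lt hαβ, hβL⟩ hβ0 h.ne
      (mul_nonneg_of_nonpos_of_nonpos hd h.le)

theorem eq_zero (S : System L k u u' φ φ' ψ ψ' p a b c) :
    ∀ x ∈ Icc 0 L, φ x = 0 ∧ ψ x = 0 := by
  have hφ : ∀ x ∈ Icc 0 L, φ x = 0 := fun x hx =>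
    le_antisymm (S.φ_nonpos x hx) (neg_nonpos.1 (S.neg.φ_nonpos x hx))
  refine fun x hx => ⟨hφ x hx, le_antisymm ?_ ?_⟩
  · exact neg_nonneg.1 (S.neg.ψ_nonneg le_rfl S.length_pos.le le_rfl S.neg.ψ_zero.ge
      S.neg.ψ_length.ge (fun z hz => by simp [hφ z (Ioo_subset_Icc_self hz)]) x hx)
  · exact S.ψ_nonneg le_rfl S.length_pos.le le_rfl S.ψ_zero.ge
      S.ψ_length.ge (fun z hz => (hφ z (Ioo_subset_Icc_self hz)).ge) x hx

end System

theorem deriv_fst_eq_fderiv {f : ℝ → ℝ → ℝ} (hf : ContDiff ℝ 1 (Function.uncurry f)) (p q : ℝ) :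
    deriv (fun s => f s q) p = fderiv ℝ (Function.uncurry f) (p, q) (1, 0) := by
  have h := (hf.differentiable (by norm_num) (p, q)).hasFDerivAt
  exact (h.comp_hasDerivAt p ((hasDerivAt_id p).prodMk (hasDerivAt_const p q))).deriv

theorem deriv_snd_eq_fderiv {f : ℝ → ℝ → ℝ} (hf : ContDiff ℝ 1 (Function.uncurry f)) (p q : ℝ) :
    deriv (f p) q = fderiv ℝ (Function.uncurry f) (p, q) (0, 1) := by
  have h := (hf.differentiable (by norm_num) (p, q)).hasFDerivAt
  exact (h.comp_hasDerivAt q ((hasDerivAt_const q p).prodMk (hasDerivAt_id q))).deriv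

end NegativeFeedback

open NegativeFeedback

/-- non-degeneracy of positive solutions of the 1D steady state system (52).
If f is C¹ with f_u < 0 and f_v < 0 on [0,∞)², H is C¹ with H(0) = 0 and H' > 0 on [0,∞),
and (u_d, v_d) is a positive classical solution of (52), then the only C² solution
(φ, ψ) of the linearized system (53) is (0, 0). -/
theorem stmt12 (L d τ : ℝ) (hL : 0 < L) (hd : 0 < d) (hτ : 0 < τ)
    (f : ℝ → ℝ → ℝ) (H : ℝ → ℝ)
    (hf : ContDiff ℝ 1 (Function.uncurry f))
    (hfu : ∀ p ≥ (0:ℝ), ∀ q ≥ (0:ℝ), deriv (fun s => f s q) p < 0)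
    (hfv : ∀ p ≥ (0:ℝ), ∀ q ≥ (0:ℝ), deriv (f p) q < 0)
    (hH : ContDiff ℝ 1 H) (hH0 : H 0 = 0)
    (hH' : ∀ p ≥ (0:ℝ), 0 < deriv H p)
    -- (u_d, v_d) positive classical solution of (52)
    (ud vd : ℝ → ℝ)
    (hu2 : ContDiffOn ℝ 2 ud (Icc 0 L)) (hv2 : ContDiffOn ℝ 2 vd (Icc 0 L))
    (hup : ∀ x ∈ Ioo 0 L, 0 < ud x) (hvp : ∀ x ∈ Ioo 0 L, 0 < vd x)
    (heq1 : ∀ x ∈ Ioo 0 L, -(d * deriv (deriv ud) x) = ud x * f (ud x) (vd x))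
    (heq2 : ∀ x ∈ Ioo 0 L, -(d * deriv (deriv vd) x) = (1 / τ) * (H (ud x) - vd x))
    (hub : ud 0 = 0 ∧ ud L = 0) (hvb : vd 0 = 0 ∧ vd L = 0)
    -- (φ, ψ) a C² solution of the linearized system (53)
    (φ ψ : ℝ → ℝ)
    (hφ2 : ContDiffOn ℝ 2 φ (Icc 0 L)) (hψ2 : ContDiffOn ℝ 2 ψ (Icc 0 L))
    (hlin1 : ∀ x ∈ Ioo 0 L,
      -(d * deriv (deriv φ) x)
        - (ud x * deriv (fun s => f s (vd x)) (ud x) + f (ud x) (vd x)) * φ x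
      = ud x * deriv (f (ud x)) (vd x) * ψ x)
    (hlin2 : ∀ x ∈ Ioo 0 L,
      -(d * deriv (deriv ψ) x) + (1 / τ) * ψ x = (1 / τ) * deriv H (ud x) * φ x)
    (hφb : φ 0 = 0 ∧ φ L = 0) (hψb : ψ 0 = 0 ∧ ψ L = 0) :
    ∀ x ∈ Icc 0 L, φ x = 0 ∧ ψ x = 0 := by
  have hcu := hu2.continuousOn
  have hcv := hv2.continuousOn
  have hfd : Continuous (fderiv ℝ (Function.uncurry f)) := hf.continuous_fderiv (by norm_num)
  have hpair : ContinuousOn (fun x => (ud x, vd x)) (Icc 0 L) := hcu.prodMk hcv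
  have hcf : ContinuousOn (fun x => f (ud x) (vd x)) (Icc 0 L) :=
    hf.continuous.comp_continuousOn hpair
  have hcfu : ContinuousOn (fun x => deriv (fun s => f s (vd x)) (ud x)) (Icc 0 L) := by
    simp only [deriv_fst_eq_fderiv hf]
    exact (hfd.comp_continuousOn hpair).clm_apply continuousOn_const
  have hcfv : ContinuousOn (fun x => deriv (f (ud x)) (vd x)) (Icc 0 L) := by
    simp only [deriv_snd_eq_fderiv hf]
    exact (hfd.comp_continuousOn hpair).clm_apply continuousOn_const
  have hcH : ContinuousOn (fun x => deriv H (ud x)) (Icc 0 L) :=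
    (hH.continuous_deriv (by norm_num)).comp_continuousOn hcu
  set p : ℝ → ℝ := fun x =>
    -(ud x * deriv (fun s => f s (vd x)) (ud x) + f (ud x) (vd x)) / d with hp
  set a : ℝ → ℝ := fun x => -(ud x * deriv (f (ud x)) (vd x)) / d with ha
  set b : ℝ → ℝ := fun x => deriv H (ud x) / (τ * d) with hb
  set c : ℝ → ℝ := fun x => -(ud x * deriv (fun s => f s (vd x)) (ud x)) / d with hc
  obtain ⟨M₁, hM₁⟩ := isCompact_Icc.exists_bound_of_continuousOn
    (show ContinuousOn p (Icc 0 L) from ((hcu.mul hcfu).add hcf).neg.div_const d)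
  obtain ⟨M₂, hM₂⟩ := isCompact_Icc.exists_bound_of_continuousOn
    (show ContinuousOn a (Icc 0 L) from (hcu.mul hcfv).neg.div_const d)
  obtain ⟨M₃, hM₃⟩ := isCompact_Icc.exists_bound_of_continuousOn
    (show ContinuousOn b (Icc 0 L) from hcH.div_const (τ * d))
  have congr_snd : ∀ {y y' y'' z : ℝ → ℝ}, IsTwiceDiff L y y' y'' →
      (∀ x ∈ Ioo 0 L, y'' x = z x) → IsTwiceDiff L y y' z :=
    fun h hz => ⟨h.deriv_fst, h.cont_deriv, fun x hx => hz x hx ▸ h.deriv_snd x hx⟩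
  have S : System L (1 / (τ * d)) ud (derivWithin ud (Icc 0 L)) φ (derivWithin φ (Icc 0 L))
      ψ (derivWithin ψ (Icc 0 L)) p a b c :=
    { length_pos := hL
      k_pos := by positivity
      a_pos := fun x hx => div_pos (neg_pos.2 (mul_neg_of_pos_of_neg (hup x hx)
        (hfv _ (hup x hx).le _ (hvp x hx).le))) hd
      b_pos := fun x hx => div_pos (hH' _ (hup x hx).le) (mul_pos hτ hd)
      c_pos := fun x hx => div_pos (neg_pos.2 (mul_neg_of_pos_of_neg (hup x hx)
        (hfu _ (hup x hx).le _ (hvp x hx).le))) hd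
      bdd := ⟨max M₁ (max M₂ M₃), fun x hx =>
        have hx' := Ioo_subset_Icc_self hx
        ⟨(hM₁ x hx').trans (le_max_left _ _),
          (hM₂ x hx').trans ((le_max_left _ _).trans (le_max_right _ _)),
          (hM₃ x hx').trans ((le_max_right _ _).trans (le_max_right _ _))⟩⟩
      u_pos := hup
      u_eq := congr_snd (IsTwiceDiff.of_contDiffOn hL hu2) fun x hx => by
        have := heq1 x hx
        simp only [hp, hc]
        field_simp
        linarith
      φ_eq := congr_snd (IsTwiceDiff.of_contDiffOn hL hφ2) fun x hx => by
        have := hlin1 x hx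
        simp only [hp, ha]
        field_simp
        linarith
      ψ_eq := congr_snd (IsTwiceDiff.of_contDiffOn hL hψ2) fun x hx => by
        have := hlin2 x hx
        simp only [hb]
        field_simp at this ⊢
        linarith
      u_zero := hub.1
      u_length := hub.2
      φ_zero := hφb.1
      φ_length := hφb.2
      ψ_zero := hψb.1
      ψ_length := hψb.2 }
  exact S.eq_zero
end

section
/- Let L, τ > 0. Assume f : [0,∞)² → ℝ is twice continuously differentiable with ∂f/∂u < 0 and ∂f/∂v < 0 everywhere on [0,∞)² and f(0,0) > 0; H : [0,∞) → ℝ is twice continuously differentiable with H(0) = 0 and H′(u) > 0 for all u ≥ 0; and condition (A4) holds for F(u, v) = u f(u, v). Set d* = f(0,0)·L²/π². Then for every d with 0 < d < d*, the one-dimensional steady-state system (52) has exactly one positive classical solution (u_d, v_d), and this solution is non-degenerate; for d ≥ d*, (52) has no positive classical solution. -/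
open Set Real

/-- A positive classical solution of the 1D steady state system (52). -/
def IsPosSol (L d τ : ℝ) (f : ℝ → ℝ → ℝ) (H : ℝ → ℝ) (u v : ℝ → ℝ) : Prop :=
  ContDiffOn ℝ 2 u (Icc 0 L) ∧ ContDiffOn ℝ 2 v (Icc 0 L) ∧
  (∀ x ∈ Ioo 0 L, 0 < u x) ∧ (∀ x ∈ Ioo 0 L, 0 < v x) ∧
  (∀ x ∈ Ioo 0 L, -(d * deriv (deriv u) x) = u x * f (u x) (v x)) ∧
  (∀ x ∈ Ioo 0 L, -(d * deriv (deriv v) x) = (1 / τ) * (H (u x) - v x)) ∧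
  u 0 = 0 ∧ u L = 0 ∧ v 0 = 0 ∧ v L = 0

/-- Non-degeneracy of a solution (u, v) of (52): the only C² solution (φ, ψ) of the
linearized system (53) is (0, 0). -/
def NonDeg (L d τ : ℝ) (f : ℝ → ℝ → ℝ) (H : ℝ → ℝ) (u v : ℝ → ℝ) : Prop :=
  ∀ φ ψ : ℝ → ℝ,
    ContDiffOn ℝ 2 φ (Icc 0 L) → ContDiffOn ℝ 2 ψ (Icc 0 L) →
    (∀ x ∈ Ioo 0 L,
      -(d * deriv (deriv φ) x)
        - (u x * deriv (fun s => f s (v x)) (u x) + f (u x) (v x)) * φ x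
      = u x * deriv (f (u x)) (v x) * ψ x) →
    (∀ x ∈ Ioo 0 L,
      -(d * deriv (deriv ψ) x) + (1 / τ) * ψ x = (1 / τ) * deriv H (u x) * φ x) →
    φ 0 = 0 → φ L = 0 → ψ 0 = 0 → ψ L = 0 →
    ∀ x ∈ Icc 0 L, φ x = 0 ∧ ψ x = 0

/-- On `[a, b]`, `φ` is continuously differentiable with derivative `p`, and `p` is differentiable
with derivative `q` in the interior. -/
structure TwiceDiffOn (a b : ℝ) (φ p q : ℝ → ℝ) : Prop where
  cont : ContinuousOn φ (Icc a b)
  cont' : ContinuousOn p (Icc a b)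
  deriv₁ : ∀ x ∈ Ioo a b, HasDerivAt φ (p x) x
  deriv₂ : ∀ x ∈ Ioo a b, HasDerivAt p (q x) x

namespace TwiceDiffOn

variable {a b : ℝ} {φ p q θ r t : ℝ → ℝ}

theorem mono (h : TwiceDiffOn a b φ p q) {a' b' : ℝ} (ha : a ≤ a') (hb : b' ≤ b) :
    TwiceDiffOn a' b' φ p q :=
  ⟨h.cont.mono (Icc_subset_Icc ha hb), h.cont'.mono (Icc_subset_Icc ha hb),
    fun x hx => h.deriv₁ x (Ioo_subset_Ioo ha hb hx),
    fun x hx => h.deriv₂ x (Ioo_subset_Ioo ha hb hx)⟩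

theorem neg (h : TwiceDiffOn a b φ p q) :
    TwiceDiffOn a b (fun x => -φ x) (fun x => -p x) (fun x => -q x) :=
  ⟨h.cont.neg, h.cont'.neg, fun x hx => (h.deriv₁ x hx).neg, fun x hx => (h.deriv₂ x hx).neg⟩

theorem sub (h : TwiceDiffOn a b φ p q) (h' : TwiceDiffOn a b θ r t) :
    TwiceDiffOn a b (fun x => φ x - θ x) (fun x => p x - r x) (fun x => q x - t x) :=
  ⟨h.cont.sub h'.cont, h.cont'.sub h'.cont', fun x hx => (h.deriv₁ x hx).sub (h'.deriv₁ x hx),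
    fun x hx => (h.deriv₂ x hx).sub (h'.deriv₂ x hx)⟩

theorem congr_deriv₂ (h : TwiceDiffOn a b φ p q) (hq : ∀ x ∈ Ioo a b, q x = t x) :
    TwiceDiffOn a b φ p t :=
  ⟨h.cont, h.cont', h.deriv₁, fun x hx => hq x hx ▸ h.deriv₂ x hx⟩

/-- Reflection of `[a, b]` about its midpoint, written with `c = a + b`. -/
theorem reflect (h : TwiceDiffOn a b φ p q) {c : ℝ} (hc : c = a + b) :
    TwiceDiffOn a b (fun x => φ (c - x)) (fun x => -p (c - x)) (fun x => q (c - x)) := by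
  have hm : MapsTo (fun x => c - x) (Icc a b) (Icc a b) := fun x hx => by
    constructor <;> simp only [] <;> linarith [hx.1, hx.2]
  have hm' : ∀ x ∈ Ioo a b, c - x ∈ Ioo a b := fun x hx => by
    constructor <;> linarith [hx.1, hx.2]
  have hd : ∀ x : ℝ, HasDerivAt (fun x => c - x) (-1) x := fun x => by
    simpa using (hasDerivAt_id x).const_sub c
  refine ⟨h.cont.comp (by fun_prop) hm, (h.cont'.comp (by fun_prop) hm).neg, fun x hx => ?_,
    fun x hx => ?_⟩
  · exact ((h.deriv₁ _ (hm' x hx)).comp x (hd x)).congr_deriv (by ring)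
  · exact ((h.deriv₂ _ (hm' x hx)).comp x (hd x)).neg.congr_deriv (by ring)

/-- If the first derivative is negative on a subinterval, the function strictly decreases. -/
theorem lt_of_deriv_neg (h : TwiceDiffOn a b φ p q) {x y : ℝ} (hx : a ≤ x) (hxy : x < y)
    (hy : y ≤ b) (hp : ∀ z ∈ Ioo x y, p z < 0) : φ y < φ x := by
  have h' := h.mono hx hy
  obtain ⟨z, hz, hz'⟩ := exists_hasDerivAt_eq_slope φ p hxy h'.cont h'.deriv₁
  have := hp z hz
  rw [hz', div_neg_iff] at this
  rcases this with h | h <;> linarith [h.1, h.2]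

theorem exists_deriv_eq_zero (h : TwiceDiffOn a b φ p q) {x y : ℝ} (hx : a ≤ x) (hxy : x < y)
    (hy : y ≤ b) (he : φ x = φ y) : ∃ z ∈ Ioo x y, p z = 0 := by
  have h' := h.mono hx hy
  exact exists_hasDerivAt_eq_zero hxy h'.cont he h'.deriv₁

theorem deriv_left_nonneg (h : TwiceDiffOn a b φ p q) (hab : a < b) (h0 : φ a = 0)
    (hpos : ∀ x ∈ Ioo a b, 0 < φ x) : 0 ≤ p a := by
  by_contra! hneg
  have hc : ∀ᶠ z in nhdsWithin a (Icc a b), p z < 0 :=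
    (h.cont' a (left_mem_Icc.2 hab.le)).eventually_lt_const hneg
  rw [nhdsWithin_Icc_eq_nhdsGE hab] at hc
  obtain ⟨c, hac, hc⟩ := mem_nhdsGE_iff_exists_Ico_subset.1 hc
  set y := min c ((a + b) / 2)
  have hay : a < y := lt_min hac (by linarith)
  have hyb : y < b := (min_le_right _ _).trans_lt (by linarith)
  have := h.lt_of_deriv_neg le_rfl hay hyb.le
    (fun z hz => hc ⟨hz.1.le, hz.2.trans_le (min_le_left _ _)⟩)
  linarith [hpos y ⟨hay, hyb⟩]

theorem deriv_right_nonpos (h : TwiceDiffOn a b φ p q) (hab : a < b) (h0 : φ b = 0)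
    (hpos : ∀ x ∈ Ioo a b, 0 < φ x) : p b ≤ 0 := by
  have := (h.reflect rfl).deriv_left_nonneg hab (by simpa using h0)
    (fun x hx => hpos _ ⟨by linarith [hx.2], by linarith [hx.1]⟩)
  simpa using this

/-- Strict Wronskian comparison: `φ` positive with zero boundary values cannot strictly oscillate
less than a function `θ` which is nonnegative at the end points. -/
theorem wronskian_false (h : TwiceDiffOn a b φ p q) (hθ : TwiceDiffOn a b θ r t) (hab : a < b)
    (ha : φ a = 0) (hb : φ b = 0) (hpos : ∀ x ∈ Ioo a b, 0 < φ x) (hθa : 0 ≤ θ a) (hθb : 0 ≤ θ b)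
    (hlt : ∀ x ∈ Ioo a b, φ x * t x < q x * θ x) : False := by
  have hmono : StrictMonoOn (fun x => p x * θ x - φ x * r x) (Icc a b) := by
    refine strictMonoOn_of_hasDerivWithinAt_pos (convex_Icc a b)
      (f' := fun x => q x * θ x - φ x * t x)
      ((h.cont'.mul hθ.cont).sub (h.cont.mul hθ.cont')) (fun x hx => ?_) (fun x hx => ?_)
    · rw [interior_Icc] at hx
      have := ((h.deriv₂ x hx).mul (hθ.deriv₁ x hx)).sub ((h.deriv₁ x hx).mul (hθ.deriv₂ x hx))
      exact (this.congr_deriv (by ring)).hasDerivWithinAt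
    · rw [interior_Icc] at hx
      linarith [hlt x hx]
  have hW := hmono (left_mem_Icc.2 hab.le) (right_mem_Icc.2 hab.le) hab
  simp only [ha, hb, zero_mul, sub_zero] at hW
  have h1 := mul_nonneg (h.deriv_left_nonneg hab ha hpos) hθa
  have h2 := mul_nonpos_of_nonpos_of_nonneg (h.deriv_right_nonpos hab hb hpos) hθb
  linarith

/-- A function with vanishing first and negative second derivative lies strictly below its value
immediately to the left. -/
theorem exists_left_lt (h : TwiceDiffOn a b φ p q) {x : ℝ} (hx : x ∈ Ioo a b) (hp : p x = 0)
    (hq : q x < 0) : ∃ y₀ ∈ Ico a x, ∀ y ∈ Ioo y₀ x, φ y < φ x := by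
  have hs : ∀ᶠ z in nhdsWithin x (Iio x), 0 < p z := by
    have h1 := (hasDerivAt_iff_tendsto_slope.1 (h.deriv₂ x hx)).eventually_lt_const hq
    have h2 := h1.filter_mono (nhdsWithin_mono x (s := Iio x) (fun z hz => ne_of_lt hz))
    filter_upwards [h2, self_mem_nhdsWithin] with z hz hzx
    rw [slope_def_field, hp, sub_zero, div_neg_iff] at hz
    have hzx' : z < x := hzx
    rcases hz with hz | hz <;> linarith [hz.1, hz.2]
  obtain ⟨c, hcx, hc⟩ := mem_nhdsLT_iff_exists_Ioo_subset.1 hs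
  refine ⟨max c a, ⟨le_max_right _ _, max_lt hcx hx.1⟩, fun y hy => ?_⟩
  have := h.neg.lt_of_deriv_neg (x := y) (y := x) ((le_max_right c a).trans hy.1.le) hy.2 hx.2.le
    (fun z hz => neg_neg_of_pos (hc ⟨(le_max_left c a).trans_lt (hy.1.trans hz.1), hz.2⟩))
  simpa using this

theorem deriv_eq_zero_of_min (h : TwiceDiffOn a b φ p q) {x : ℝ} (hx : x ∈ Ioo a b)
    (hmin : ∀ y ∈ Icc a b, φ x ≤ φ y) : p x = 0 := by
  have hl : IsLocalMin φ x :=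
    Filter.mem_of_superset (Icc_mem_nhds hx.1 hx.2) hmin
  exact hl.hasDerivAt_eq_zero (h.deriv₁ x hx)

theorem deriv₂_nonneg_of_min (h : TwiceDiffOn a b φ p q) {x : ℝ} (hx : x ∈ Ioo a b)
    (hmin : ∀ y ∈ Icc a b, φ x ≤ φ y) : 0 ≤ q x := by
  by_contra! hq
  obtain ⟨y₀, hy₀, hy⟩ := h.exists_left_lt hx (h.deriv_eq_zero_of_min hx hmin) hq
  have h1 : (y₀ + x) / 2 ∈ Ioo y₀ x := ⟨by linarith [hy₀.2], by linarith [hy₀.2]⟩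
  have := hmin _ ⟨hy₀.1.trans h1.1.le, h1.2.le.trans hx.2.le⟩
  linarith [hy _ h1]

/-- Minimum principle. -/
theorem nonneg_of_deriv₂ (h : TwiceDiffOn a b φ p q) (ha : 0 ≤ φ a) (hb : 0 ≤ φ b)
    (hq : ∀ x ∈ Ioo a b, φ x < 0 → q x < 0) : ∀ x ∈ Icc a b, 0 ≤ φ x := by
  intro x hx
  obtain ⟨x₀, hx₀, hmin⟩ := isCompact_Icc.exists_isMinOn ⟨x, hx⟩ h.cont
  by_contra! hneg
  have h0 : φ x₀ < 0 := (hmin hx).trans_lt hneg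
  have hx₀' : x₀ ∈ Ioo a b := by
    refine ⟨lt_of_le_of_ne hx₀.1 ?_, lt_of_le_of_ne hx₀.2 ?_⟩ <;> rintro rfl <;> linarith
  linarith [hq x₀ hx₀' h0, h.deriv₂_nonneg_of_min hx₀' hmin]

/-- Maximum principle. -/
theorem le_of_deriv₂ (h : TwiceDiffOn a b φ p q) {C : ℝ} (ha : φ a ≤ C) (hb : φ b ≤ C)
    (hq : ∀ x ∈ Ioo a b, C < φ x → 0 < q x) : ∀ x ∈ Icc a b, φ x ≤ C := by
  have hC : TwiceDiffOn a b (fun _ => C) (fun _ => 0) (fun _ => 0) :=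
    ⟨continuousOn_const, continuousOn_const, fun x _ => hasDerivAt_const x C,
      fun x _ => hasDerivAt_const x 0⟩
  intro x hx
  have := (hC.sub h).nonneg_of_deriv₂ (by linarith) (by linarith)
    (fun x hx hl => by linarith [hq x hx (by linarith)]) x hx
  linarith

/-- Backward uniqueness for second order systems with bounded coefficients. -/
theorem eq_zero_of_right (h : TwiceDiffOn a b φ p q) (h' : TwiceDiffOn a b θ r t) {M : ℝ}
    (hq : ∀ x ∈ Ioo a b, |q x| ≤ M * (|φ x| + |θ x|))
    (ht : ∀ x ∈ Ioo a b, |t x| ≤ M * (|φ x| + |θ x|))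
    (h1 : φ b = 0) (h2 : p b = 0) (h3 : θ b = 0) (h4 : r b = 0) :
    ∀ x ∈ Icc a b, φ x = 0 ∧ θ x = 0 := by
  intro x hx
  set C : ℝ := 2 + 4 * |M| with hC
  have hmono : MonotoneOn (fun x => (φ x ^ 2 + p x ^ 2 + θ x ^ 2 + r x ^ 2) * exp (C * x))
      (Icc a b) := by
    refine monotoneOn_of_hasDerivWithinAt_nonneg (convex_Icc a b)
      (f' := fun x => (2 * φ x * p x + 2 * p x * q x + 2 * θ x * r x + 2 * r x * t x
        + C * (φ x ^ 2 + p x ^ 2 + θ x ^ 2 + r x ^ 2)) * exp (C * x)) ?_ (fun x hx => ?_)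
      (fun x hx => ?_)
    · have := h.cont; have := h.cont'; have := h'.cont; have := h'.cont'
      fun_prop
    · rw [interior_Icc] at hx
      have he : HasDerivAt (fun x => exp (C * x)) (exp (C * x) * C) x := by
        simpa using ((hasDerivAt_id x).const_mul C).exp
      have := ((((h.deriv₁ x hx).pow 2).add ((h.deriv₂ x hx).pow 2)).add
        ((h'.deriv₁ x hx).pow 2)).add ((h'.deriv₂ x hx).pow 2) |>.mul he
      exact (this.congr_deriv (by simp only [Pi.add_apply, Pi.pow_apply]; ring)).hasDerivWithinAt
    · rw [interior_Icc] at hx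
      refine mul_nonneg ?_ (exp_pos _).le
      have e1 := (hq x hx).trans (mul_le_mul_of_nonneg_right (le_abs_self M) (by positivity))
      have e2 := (ht x hx).trans (mul_le_mul_of_nonneg_right (le_abs_self M) (by positivity))
      have hM := abs_nonneg M
      have key : ∀ y w : ℝ, |w| ≤ |M| * (|φ x| + |θ x|) →
          |y * w| ≤ |M| * (y ^ 2 + φ x ^ 2 / 2 + θ x ^ 2 / 2) := by
        intro y w hw
        rw [abs_mul]
        calc |y| * |w| ≤ |y| * (|M| * (|φ x| + |θ x|)) := by gcongr
          _ = |M| * (|y| * |φ x| + |y| * |θ x|) := by ring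
          _ ≤ _ := by
            refine mul_le_mul_of_nonneg_left ?_ hM
            nlinarith [sq_nonneg (|y| - |φ x|), sq_nonneg (|y| - |θ x|), sq_abs y, sq_abs (φ x),
              sq_abs (θ x)]
      have k1 := neg_le_of_abs_le (key (p x) (q x) e1)
      have k2 := neg_le_of_abs_le (key (r x) (t x) e2)
      rw [hC]
      nlinarith [sq_nonneg (φ x + p x), sq_nonneg (θ x + r x), mul_nonneg hM (sq_nonneg (φ x)),
        mul_nonneg hM (sq_nonneg (p x)), mul_nonneg hM (sq_nonneg (θ x)),
        mul_nonneg hM (sq_nonneg (r x))]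
  have hle := hmono hx (right_mem_Icc.2 (hx.1.trans hx.2)) hx.2
  simp only [h1, h2, h3, h4] at hle
  norm_num at hle
  have hle' : φ x ^ 2 + p x ^ 2 + θ x ^ 2 + r x ^ 2 ≤ 0 := by
    by_contra! hcon
    linarith [mul_pos hcon (exp_pos (C * x))]
  constructor
  · nlinarith [sq_nonneg (φ x), sq_nonneg (p x), sq_nonneg (θ x), sq_nonneg (r x)]
  · nlinarith [sq_nonneg (φ x), sq_nonneg (p x), sq_nonneg (θ x), sq_nonneg (r x)]

end TwiceDiffOn

/-- A point of positivity of a continuous function lies in an interval of positivity bounded by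
zeros. -/
theorem exists_component_pos {a b : ℝ} {φ : ℝ → ℝ} (hc : ContinuousOn φ (Icc a b)) {x : ℝ}
    (hx : x ∈ Icc a b) (ha : φ a = 0) (hb : φ b = 0) (hpos : 0 < φ x) :
    ∃ a' b', a ≤ a' ∧ a' < x ∧ x < b' ∧ b' ≤ b ∧ φ a' = 0 ∧ φ b' = 0 ∧
      ∀ y ∈ Ioo a' b', 0 < φ y := by
  have hcl : ∀ c d, a ≤ c → d ≤ b → IsCompact (Icc c d ∩ φ ⁻¹' {0}) := fun c d h1 h2 =>
    isCompact_Icc.of_isClosed_subset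
      ((hc.mono (Icc_subset_Icc h1 h2)).preimage_isClosed_of_isClosed isClosed_Icc
        isClosed_singleton) inter_subset_left
  obtain ⟨a', ⟨ha'm, ha'0⟩, ha'⟩ := (hcl a x le_rfl hx.2).exists_isGreatest
    ⟨a, left_mem_Icc.2 hx.1, ha⟩
  obtain ⟨b', ⟨hb'm, hb'0⟩, hb'⟩ := (hcl x b hx.1 le_rfl).exists_isLeast
    ⟨b, right_mem_Icc.2 hx.2, hb⟩
  have ha'0 : φ a' = 0 := ha'0
  have hb'0 : φ b' = 0 := hb'0
  have h1 : a' < x := lt_of_le_of_ne ha'm.2 (by rintro rfl; linarith)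
  have h2 : x < b' := lt_of_le_of_ne hb'm.1 (by rintro rfl; linarith)
  refine ⟨a', b', ha'm.1, h1, h2, hb'm.2, ha'0, hb'0, fun y hy => ?_⟩
  by_contra! hneg
  rcases le_total y x with hyx | hxy
  · obtain ⟨z, hz, hz0⟩ := intermediate_value_Icc hyx
      (hc.mono (Icc_subset_Icc (ha'm.1.trans hy.1.le) hx.2)) ⟨hneg, hpos.le⟩
    exact absurd (ha' ⟨⟨(ha'm.1.trans hy.1.le).trans hz.1, hz.2⟩, hz0⟩)
      (not_le.2 (hy.1.trans_le hz.1))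
  · obtain ⟨z, hz, hz0⟩ := intermediate_value_Icc' hxy
      (hc.mono (Icc_subset_Icc hx.1 (hy.2.le.trans hb'm.2))) ⟨hneg, hpos.le⟩
    exact absurd (hb' ⟨⟨hz.1, (hz.2.trans hy.2.le).trans hb'm.2⟩, hz0⟩)
      (not_le.2 (hz.2.trans_lt hy.2))

/-- A linear system with the sign structure of an activator and an inhibitor, where the first
operator has the positive supersolution `θ`. -/
structure SignedSystem (L M : ℝ) (A B κ k γ θ θ' φ p ψ r : ℝ → ℝ) : Prop where
  diffθ : TwiceDiffOn 0 L θ θ' (fun x => -(A x * θ x))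
  posθ : ∀ x ∈ Ioo 0 L, 0 < θ x
  diffφ : TwiceDiffOn 0 L φ p (fun x => (B x - A x) * φ x + κ x * ψ x)
  diffψ : TwiceDiffOn 0 L ψ r (fun x => k x * ψ x - γ x * φ x)
  posB : ∀ x ∈ Ioo 0 L, 0 < B x
  posκ : ∀ x ∈ Ioo 0 L, 0 < κ x
  posk : ∀ x ∈ Ioo 0 L, 0 < k x
  posγ : ∀ x ∈ Ioo 0 L, 0 < γ x
  boundBA : ∀ x ∈ Ioo 0 L, |B x - A x| ≤ M
  boundκ : ∀ x ∈ Ioo 0 L, κ x ≤ M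
  boundk : ∀ x ∈ Ioo 0 L, k x ≤ M
  boundγ : ∀ x ∈ Ioo 0 L, γ x ≤ M

/-- `φ` vanishes at `x`, is positive immediately to the left, and `ψ x < 0`. -/
def IsExit (L : ℝ) (φ ψ : ℝ → ℝ) (x : ℝ) : Prop :=
  x ∈ Ioo 0 L ∧ φ x = 0 ∧ ψ x < 0 ∧ ∃ y ∈ Ico 0 x, ∀ z ∈ Ioo y x, 0 < φ z

namespace SignedSystem

variable {L M : ℝ} {A B κ k γ θ θ' φ p ψ r : ℝ → ℝ}

theorem neg (h : SignedSystem L M A B κ k γ θ θ' φ p ψ r) :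
    SignedSystem L M A B κ k γ θ θ' (fun x => -φ x) (fun x => -p x) (fun x => -ψ x)
      (fun x => -r x) :=
  { h with
    diffφ := h.diffφ.neg.congr_deriv₂ (fun x _ => by ring)
    diffψ := h.diffψ.neg.congr_deriv₂ (fun x _ => by ring) }

theorem reflect (h : SignedSystem L M A B κ k γ θ θ' φ p ψ r) :
    SignedSystem L M (fun x => A (L - x)) (fun x => B (L - x)) (fun x => κ (L - x))
      (fun x => k (L - x)) (fun x => γ (L - x)) (fun x => θ (L - x)) (fun x => -θ' (L - x))
      (fun x => φ (L - x)) (fun x => -p (L - x)) (fun x => ψ (L - x)) (fun x => -r (L - x)) := by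
  have hm : ∀ x ∈ Ioo 0 L, L - x ∈ Ioo 0 L := fun x hx =>
    ⟨by linarith [hx.2], by linarith [hx.1]⟩
  exact
  { diffθ := h.diffθ.reflect (by ring)
    posθ := fun x hx => h.posθ _ (hm x hx)
    diffφ := h.diffφ.reflect (by ring)
    diffψ := h.diffψ.reflect (by ring)
    posB := fun x hx => h.posB _ (hm x hx)
    posκ := fun x hx => h.posκ _ (hm x hx)
    posk := fun x hx => h.posk _ (hm x hx)
    posγ := fun x hx => h.posγ _ (hm x hx)
    boundBA := fun x hx => h.boundBA _ (hm x hx)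
    boundκ := fun x hx => h.boundκ _ (hm x hx)
    boundk := fun x hx => h.boundk _ (hm x hx)
    boundγ := fun x hx => h.boundγ _ (hm x hx) }

theorem θ_nonneg (h : SignedSystem L M A B κ k γ θ θ' φ p ψ r) {x : ℝ} (hL : 0 < L)
    (hx : x ∈ Icc 0 L) : 0 ≤ θ x := by
  have hcl : x ∈ closure (Ioo 0 L) := by rwa [closure_Ioo hL.ne]
  have hc : ContinuousWithinAt θ (Ioo 0 L) x := (h.diffθ.cont x hx).mono Ioo_subset_Icc_self
  have : (nhdsWithin x (Ioo 0 L)).NeBot := mem_closure_iff_nhdsWithin_neBot.1 hcl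
  exact ge_of_tendsto hc (Filter.eventually_of_mem self_mem_nhdsWithin
    (fun y hy => (h.posθ y hy).le))

/-- Where `φ` is positive between zeros, `ψ` is negative at one of the two end points. -/
theorem endpoint_neg (h : SignedSystem L M A B κ k γ θ θ' φ p ψ r) {a b : ℝ} (ha : 0 ≤ a)
    (hab : a < b) (hb : b ≤ L) (hφa : φ a = 0) (hφb : φ b = 0) (hpos : ∀ x ∈ Ioo a b, 0 < φ x) :
    ψ a < 0 ∨ ψ b < 0 := by
  by_contra! hcon
  have hL : 0 < L := ha.trans_lt (hab.trans_le hb)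
  have hm : ∀ x ∈ Ioo a b, x ∈ Ioo 0 L := fun x hx => Ioo_subset_Ioo ha hb hx
  have hψ := (h.diffψ.mono ha hb).nonneg_of_deriv₂ hcon.1 hcon.2 (fun x hx hneg => by
    nlinarith [mul_pos (h.posγ x (hm x hx)) (hpos x hx),
      mul_pos (h.posk x (hm x hx)) (neg_pos.2 hneg)])
  refine (h.diffφ.mono ha hb).wronskian_false (h.diffθ.mono ha hb) hab hφa hφb hpos
    (h.θ_nonneg hL ⟨ha, (hab.trans_le hb).le⟩) (h.θ_nonneg hL ⟨ha.trans hab.le, hb⟩)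
    (fun x hx => ?_)
  have h1 := h.posθ x (hm x hx)
  have h2 := mul_pos (h.posB x (hm x hx)) (hpos x hx)
  have h3 := mul_nonneg (h.posκ x (hm x hx)).le (hψ x (Ioo_subset_Icc_self hx))
  nlinarith [mul_pos h2 h1, mul_nonneg h3 h1.le]

/-- Propagation of exit points to the right. -/
theorem exists_next (h : SignedSystem L M A B κ k γ θ θ' φ p ψ r) (hφL : φ L = 0) (hψL : ψ L = 0)
    {x : ℝ} (hx : IsExit L φ ψ x) :
    ∃ c, x < c ∧ IsExit L (fun x => -φ x) (fun x => -ψ x) c := by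
  obtain ⟨hxL, hφx, hψx, y, hy, hpos⟩ := hx
  have hp : p x ≤ 0 := (h.diffφ.mono hy.1 hxL.2.le).deriv_right_nonpos hy.2 hφx hpos
  have hp : p x < 0 := by
    refine lt_of_le_of_ne hp fun hp0 => ?_
    obtain ⟨y', hy', hlt⟩ := h.diffφ.exists_left_lt hxL hp0
      (by simpa [hφx] using mul_neg_of_pos_of_neg (h.posκ x hxL) hψx)
    have hm : max y y' < x := max_lt hy.2 hy'.2
    have h1 := hlt ((max y y' + x) / 2) ⟨by linarith [le_max_right y y'], by linarith⟩
    have h2 := hpos ((max y y' + x) / 2) ⟨by linarith [le_max_left y y'], by linarith⟩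
    linarith
  have hnear : ∀ᶠ z in nhds x, p z < 0 :=
    (h.diffφ.cont'.continuousAt (Icc_mem_nhds hxL.1 hxL.2)).eventually_lt_const hp
  obtain ⟨c₁, hc₁, hsub⟩ := mem_nhdsGT_iff_exists_Ioo_subset.1
    (hnear.filter_mono nhdsWithin_le_nhds : ∀ᶠ z in nhdsWithin x (Ioi x), p z < 0)
  set w := min ((x + c₁) / 2) ((x + L) / 2)
  have hc₁' : x < c₁ := hc₁
  have hxw : x < w := lt_min (by linarith) (by linarith [hxL.2])
  have hwc : w < c₁ := (min_le_left _ _).trans_lt (by linarith)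
  have hwL : w < L := (min_le_right _ _).trans_lt (by linarith [hxL.2])
  have hneg : ∀ z ∈ Ioc x w, φ z < 0 := fun z hz => by
    have := h.diffφ.lt_of_deriv_neg hxL.1.le hz.1 (hz.2.trans hwL.le)
      (fun s hs => hsub ⟨hs.1, (hs.2.trans_le hz.2).trans hwc⟩)
    linarith
  obtain ⟨a', c, ha', ha'w, hwc', hcL, hφa', hφc, hpos'⟩ := exists_component_pos
    (φ := fun x => -φ x) (h.diffφ.neg.cont.mono (Icc_subset_Icc hxL.1.le le_rfl))
    ⟨hxw.le, hwL.le⟩ (by simp [hφx]) (by simp [hφL]) (by linarith [hneg w ⟨hxw, le_rfl⟩])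
  have hax : a' = x := by
    rcases ha'.eq_or_lt with h | hlt
    · exact h.symm
    · linarith [hneg a' ⟨hlt, ha'w.le⟩]
  subst hax
  have hcψ : -ψ c < 0 := by
    rcases h.neg.endpoint_neg hxL.1.le (hxw.trans hwc') hcL hφa' hφc hpos' with h1 | h1
    · linarith
    · exact h1
  have hcL' : c < L := lt_of_le_of_ne hcL (by rintro rfl; linarith)
  exact ⟨c, hxw.trans hwc', ⟨hxL.1.trans (hxw.trans hwc'), hcL'⟩, hφc, hcψ, a',
    ⟨hxL.1.le, hxw.trans hwc'⟩, hpos'⟩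

end SignedSystem

theorem eq_zero_of_accumulating_zeros {a b c : ℝ} {g : ℝ → ℝ} (hg : ContinuousOn g (Icc a b))
    (hz : ∀ y < c, ∃ z ∈ Ioo y c, z ∈ Icc a b ∧ g z = 0) : g c = 0 := by
  have hcl : IsClosed (Icc a b ∩ g ⁻¹' {0}) :=
    hg.preimage_isClosed_of_isClosed isClosed_Icc isClosed_singleton
  have : c ∈ closure (Icc a b ∩ g ⁻¹' {0}) := by
    rw [Metric.mem_closure_iff]
    intro ε hε
    obtain ⟨z, hz, hzm, hz0⟩ := hz (c - ε) (by linarith)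
    exact ⟨z, ⟨hzm, hz0⟩, by rw [Real.dist_eq, abs_of_pos] <;> linarith [hz.1, hz.2]⟩
  exact (hcl.closure_subset this).2

namespace SignedSystem

variable {L M : ℝ} {A B κ k γ θ θ' φ p ψ r : ℝ → ℝ}

theorem not_isExit (h : SignedSystem L M A B κ k γ θ θ' φ p ψ r) (hφL : φ L = 0) (hψL : ψ L = 0)
    (x₀ : ℝ) : ¬ IsExit L φ ψ x₀ := by
  intro hx₀
  set S : Set ℝ := {x | IsExit L φ ψ x ∨ IsExit L (fun x => -φ x) (fun x => -ψ x) x} with hS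
  have hmem : ∀ x ∈ S, x ∈ Ioo 0 L ∧ φ x = 0 := by
    rintro x (hx | hx)
    · exact ⟨hx.1, hx.2.1⟩
    · exact ⟨hx.1, neg_eq_zero.1 hx.2.1⟩
  have hpn : ∀ x, IsExit L φ ψ x → ∃ c, x < c ∧ IsExit L (fun x => -φ x) (fun x => -ψ x) c :=
    fun x hx => h.exists_next hφL hψL hx
  have hnp : ∀ x, IsExit L (fun x => -φ x) (fun x => -ψ x) x → ∃ c, x < c ∧ IsExit L φ ψ c :=
    fun x hx => by
      simpa using h.neg.exists_next (by simp [hφL]) (by simp [hψL]) hx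
  have hstep : ∀ x ∈ S, ∃ y z, x < y ∧ y < z ∧ y ∈ S ∧ z ∈ S ∧ ψ y * ψ z < 0 := by
    rintro x (hx | hx)
    · obtain ⟨y, hxy, hy⟩ := hpn x hx
      obtain ⟨z, hyz, hz⟩ := hnp y hy
      exact ⟨y, z, hxy, hyz, Or.inr hy, Or.inl hz,
        mul_neg_of_pos_of_neg (by linarith [hy.2.2.1]) hz.2.2.1⟩
    · obtain ⟨y, hxy, hy⟩ := hnp x hx
      obtain ⟨z, hyz, hz⟩ := hpn y hy
      exact ⟨y, z, hxy, hyz, Or.inl hy, Or.inr hz,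
        mul_neg_of_neg_of_pos hy.2.2.1 (by linarith [hz.2.2.1])⟩
  have hbdd : BddAbove S := ⟨L, fun x hx => (hmem x hx).1.2.le⟩
  have hne : S.Nonempty := ⟨x₀, Or.inl hx₀⟩
  set c := sSup S with hc
  have hle : ∀ x ∈ S, x < c := fun x hx => by
    obtain ⟨y, _, hxy, _, hy, _⟩ := hstep x hx
    exact hxy.trans_le (le_csSup hbdd hy)
  have hcI : c ∈ Icc 0 L :=
    ⟨(hmem x₀ (Or.inl hx₀)).1.1.le.trans (hle x₀ (Or.inl hx₀)).le,
      csSup_le hne fun x hx => (hmem x hx).1.2.le⟩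
  have hfind : ∀ y < c, ∃ s t, y < s ∧ s < t ∧ t < c ∧ s ∈ Ioo 0 L ∧ t ∈ Ioo 0 L ∧ φ s = 0 ∧
      φ t = 0 ∧ ψ s * ψ t < 0 := by
    intro y hy
    obtain ⟨x, hx, hyx⟩ := exists_lt_of_lt_csSup hne hy
    obtain ⟨s, t, h1, h2, hs, ht, h3⟩ := hstep x hx
    exact ⟨s, t, hyx.trans h1, h2, hle t ht, (hmem s hs).1, (hmem t ht).1, (hmem s hs).2,
      (hmem t ht).2, h3⟩
  have hφc : φ c = 0 := eq_zero_of_accumulating_zeros h.diffφ.cont fun y hy => by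
    obtain ⟨s, t, h1, h2, h3, hs, _, h4, _⟩ := hfind y hy
    exact ⟨s, ⟨h1, h2.trans h3⟩, Ioo_subset_Icc_self hs, h4⟩
  have hpc : p c = 0 := eq_zero_of_accumulating_zeros h.diffφ.cont' fun y hy => by
    obtain ⟨s, t, h1, h2, h3, hs, ht, h4, h5, _⟩ := hfind y hy
    obtain ⟨z, hz, hz0⟩ := h.diffφ.exists_deriv_eq_zero hs.1.le h2 ht.2.le (h4.trans h5.symm)
    exact ⟨z, ⟨h1.trans hz.1, hz.2.trans h3⟩, ⟨(hs.1.trans hz.1).le, (hz.2.trans ht.2).le⟩, hz0⟩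
  have hψzero : ∀ y < c, ∃ z ∈ Ioo y c, z ∈ Icc 0 L ∧ ψ z = 0 := fun y hy => by
    obtain ⟨s, t, h1, h2, h3, hs, ht, _, _, h4⟩ := hfind y hy
    have hcont := h.diffψ.cont.mono (Icc_subset_Icc hs.1.le ht.2.le)
    obtain ⟨z, hz, hz0⟩ : (0 : ℝ) ∈ ψ '' Icc s t := by
      rcases mul_neg_iff.1 h4 with h5 | h5
      · exact intermediate_value_Icc' h2.le hcont ⟨h5.2.le, h5.1.le⟩
      · exact intermediate_value_Icc h2.le hcont ⟨h5.1.le, h5.2.le⟩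
    exact ⟨z, ⟨h1.trans_le hz.1, hz.2.trans_lt h3⟩, ⟨hs.1.le.trans hz.1, hz.2.trans ht.2.le⟩, hz0⟩
  have hψc : ψ c = 0 := eq_zero_of_accumulating_zeros h.diffψ.cont hψzero
  have hrc : r c = 0 := eq_zero_of_accumulating_zeros h.diffψ.cont' fun y hy => by
    obtain ⟨s, hs, hsI, hs0⟩ := hψzero y hy
    obtain ⟨t, ht, htI, ht0⟩ := hψzero s hs.2
    obtain ⟨z, hz, hz0⟩ := h.diffψ.exists_deriv_eq_zero hsI.1 ht.1 htI.2 (hs0.trans ht0.symm)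
    exact ⟨z, ⟨hs.1.trans hz.1, hz.2.trans ht.2⟩, ⟨hsI.1.trans hz.1.le, hz.2.le.trans htI.2⟩, hz0⟩
  have hx₀c : x₀ < c := hle x₀ (Or.inl hx₀)
  have hsub : ∀ x ∈ Ioo x₀ c, x ∈ Ioo 0 L := fun x hx =>
    ⟨hx₀.1.1.trans hx.1, hx.2.trans_le hcI.2⟩
  have := (h.diffφ.mono hx₀.1.1.le hcI.2).eq_zero_of_right (h.diffψ.mono hx₀.1.1.le hcI.2)
    (M := M) (fun x hx => ?_) (fun x hx => ?_) hφc hpc hψc hrc x₀ (left_mem_Icc.2 hx₀c.le)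
  · linarith [hx₀.2.2.1, this.2]
  · have hx' := hsub x hx
    calc |(B x - A x) * φ x + κ x * ψ x| ≤ |B x - A x| * |φ x| + |κ x| * |ψ x| := by
          rw [← abs_mul, ← abs_mul]; exact abs_add_le _ _
      _ ≤ M * |φ x| + M * |ψ x| := by
          gcongr
          · exact h.boundBA x hx'
          · rw [abs_of_pos (h.posκ x hx')]; exact h.boundκ x hx'
      _ = _ := by ring
  · have hx' := hsub x hx
    calc |k x * ψ x - γ x * φ x| ≤ |k x| * |ψ x| + |γ x| * |φ x| := by
          rw [← abs_mul, ← abs_mul]; exact abs_sub _ _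
      _ ≤ M * |ψ x| + M * |φ x| := by
          gcongr
          · rw [abs_of_pos (h.posk x hx')]; exact h.boundk x hx'
          · rw [abs_of_pos (h.posγ x hx')]; exact h.boundγ x hx'
      _ = _ := by ring

theorem nonpos (h : SignedSystem L M A B κ k γ θ θ' φ p ψ r) (hφ0 : φ 0 = 0) (hφL : φ L = 0)
    (hψ0 : ψ 0 = 0) (hψL : ψ L = 0) : ∀ x ∈ Icc 0 L, φ x ≤ 0 := by
  intro x hx
  by_contra! hpos
  obtain ⟨a, b, ha, hax, hxb, hb, hφa, hφb, hab⟩ :=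
    exists_component_pos h.diffφ.cont hx hφ0 hφL hpos
  rcases h.endpoint_neg ha (hax.trans hxb) hb hφa hφb hab with hψ | hψ
  · have ha0 : 0 < a := lt_of_le_of_ne ha (by rintro rfl; linarith)
    refine h.reflect.not_isExit (by simpa using hφ0) (by simpa using hψ0) (L - a)
      ⟨⟨by linarith, by linarith⟩, by simpa using hφa, by simpa using hψ, L - b,
        ⟨by linarith, by linarith⟩, fun z hz => hab _ ⟨by linarith [hz.2], by linarith [hz.1]⟩⟩
  · have hbL : b < L := lt_of_le_of_ne hb (by rintro rfl; linarith)
    exact h.not_isExit hφL hψL b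
      ⟨⟨by linarith, hbL⟩, hφb, hψ, a, ⟨ha, hax.trans hxb⟩, hab⟩

/-- A signed system with zero boundary values has only the zero solution. -/
theorem eq_zero (h : SignedSystem L M A B κ k γ θ θ' φ p ψ r) (hφ0 : φ 0 = 0) (hφL : φ L = 0)
    (hψ0 : ψ 0 = 0) (hψL : ψ L = 0) : ∀ x ∈ Icc 0 L, φ x = 0 ∧ ψ x = 0 := by
  have hφ : ∀ x ∈ Icc 0 L, φ x = 0 := fun x hx => by
    have h1 := h.nonpos hφ0 hφL hψ0 hψL x hx
    have h2 := h.neg.nonpos (by simp [hφ0]) (by simp [hφL]) (by simp [hψ0]) (by simp [hψL]) x hx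
    linarith
  have hψ1 := h.diffψ.nonneg_of_deriv₂ hψ0.ge hψL.ge (fun x hx hneg => by
    rw [hφ x (Ioo_subset_Icc_self hx)]
    linarith [mul_neg_of_pos_of_neg (h.posk x hx) hneg])
  have hψ2 := h.neg.diffψ.nonneg_of_deriv₂ (by simp [hψ0]) (by simp [hψL]) (fun x hx hneg => by
    rw [hφ x (Ioo_subset_Icc_self hx)]
    linarith [mul_neg_of_pos_of_neg (h.posk x hx) hneg])
  exact fun x hx => ⟨hφ x hx, le_antisymm (by linarith [hψ2 x hx]) (hψ1 x hx)⟩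

end SignedSystem

theorem TwiceDiffOn.of_contDiffOn {L : ℝ} (hL : 0 < L) {u : ℝ → ℝ}
    (hu : ContDiffOn ℝ 2 u (Icc 0 L)) :
    TwiceDiffOn 0 L u (derivWithin u (Icc 0 L)) (fun x => deriv (deriv u) x) := by
  have hud : UniqueDiffOn ℝ (Icc 0 L) := uniqueDiffOn_Icc hL
  have h1 : ContDiffOn ℝ 1 (derivWithin u (Icc 0 L)) (Icc 0 L) :=
    hu.derivWithin hud (by norm_num)
  refine ⟨hu.continuousOn, h1.continuousOn, fun x hx => ?_, fun x hx => ?_⟩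
  · have hn := Icc_mem_nhds hx.1 hx.2
    exact (hu.differentiableOn (by norm_num) x
      (Ioo_subset_Icc_self hx)).hasDerivWithinAt.hasDerivAt hn
  · have hn := Icc_mem_nhds hx.1 hx.2
    have h2 := ((h1.differentiableOn (by norm_num) x
      (Ioo_subset_Icc_self hx)).differentiableAt hn).hasDerivAt
    refine h2.congr_deriv (Filter.EventuallyEq.deriv_eq ?_)
    filter_upwards [isOpen_Ioo.mem_nhds hx] with y hy
    exact derivWithin_of_mem_nhds (Icc_mem_nhds hy.1 hy.2)

section partials

variable {f : ℝ → ℝ → ℝ}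

theorem hasDerivAt_fst_slice (hf : ContDiff ℝ 2 (Function.uncurry f)) (p q : ℝ) :
    HasDerivAt (fun s => f s q) (fderiv ℝ (Function.uncurry f) (p, q) (1, 0)) p :=
  HasFDerivAt.comp_hasDerivAt (l := Function.uncurry f) p
    (hf.differentiable (by norm_num) (p, q)).hasFDerivAt
    ((hasDerivAt_id' p).prodMk (hasDerivAt_const p q))

theorem hasDerivAt_snd_slice (hf : ContDiff ℝ 2 (Function.uncurry f)) (p q : ℝ) :
    HasDerivAt (f p) (fderiv ℝ (Function.uncurry f) (p, q) (0, 1)) q :=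
  HasFDerivAt.comp_hasDerivAt (l := Function.uncurry f) q
    (hf.differentiable (by norm_num) (p, q)).hasFDerivAt
    ((hasDerivAt_const q p).prodMk (hasDerivAt_id' q))

theorem continuous_deriv_fst (hf : ContDiff ℝ 2 (Function.uncurry f)) :
    Continuous fun z : ℝ × ℝ => deriv (fun s => f s z.2) z.1 := by
  have h : (fun z : ℝ × ℝ => deriv (fun s => f s z.2) z.1) =
      fun z => fderiv ℝ (Function.uncurry f) z (1, 0) :=
    funext fun z => (hasDerivAt_fst_slice hf z.1 z.2).deriv
  rw [h]
  exact (hf.continuous_fderiv (by norm_num)).clm_apply continuous_const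

theorem continuous_deriv_snd (hf : ContDiff ℝ 2 (Function.uncurry f)) :
    Continuous fun z : ℝ × ℝ => deriv (f z.1) z.2 := by
  have h : (fun z : ℝ × ℝ => deriv (f z.1) z.2) =
      fun z => fderiv ℝ (Function.uncurry f) z (0, 1) :=
    funext fun z => (hasDerivAt_snd_slice hf z.1 z.2).deriv
  rw [h]
  exact (hf.continuous_fderiv (by norm_num)).clm_apply continuous_const

theorem fderiv_uncurry_apply (hf : ContDiff ℝ 2 (Function.uncurry f)) (p q a b : ℝ) :
    fderiv ℝ (Function.uncurry f) (p, q) (a, b) =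
    deriv (fun s => f s q) p * a + deriv (f p) q * b := by
  rw [(hasDerivAt_fst_slice hf p q).deriv, (hasDerivAt_snd_slice hf p q).deriv]
  have : ((a, b) : ℝ × ℝ) = a • (1, 0) + b • (0, 1) := by ext <;> simp
  rw [this, map_add, map_smul, map_smul]
  simp [mul_comm]

end partials

/-- Mean value theorem on `[0, R]` without an ordering of the points. -/
theorem exists_sub_eq_deriv_mul {g : ℝ → ℝ} (hg : Differentiable ℝ g) {R x y : ℝ}
    (hx : x ∈ Icc 0 R) (hy : y ∈ Icc 0 R) : ∃ ξ ∈ Icc 0 R, g x - g y = deriv g ξ * (x - y) := by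
  rcases lt_trichotomy x y with h | rfl | h
  · obtain ⟨ξ, hξ, he⟩ := exists_deriv_eq_slope g h hg.continuous.continuousOn hg.differentiableOn
    refine ⟨ξ, ⟨hx.1.trans hξ.1.le, hξ.2.le.trans hy.2⟩, ?_⟩
    rw [he]
    field_simp [(sub_pos.2 h).ne']
    ring
  · exact ⟨x, hx, by simp⟩
  · obtain ⟨ξ, hξ, he⟩ := exists_deriv_eq_slope g h hg.continuous.continuousOn hg.differentiableOn
    refine ⟨ξ, ⟨hy.1.trans hξ.1.le, hξ.2.le.trans hx.2⟩, ?_⟩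
    rw [he]
    field_simp [(sub_pos.2 h).ne']

theorem nonneg_on_Icc {L : ℝ} {u : ℝ → ℝ} (h0 : u 0 = 0) (hL : u L = 0)
    (hpos : ∀ x ∈ Ioo 0 L, 0 < u x) : ∀ x ∈ Icc 0 L, 0 ≤ u x := by
  intro x hx
  rcases hx.1.eq_or_lt with rfl | h1
  · exact h0.ge
  rcases hx.2.eq_or_lt with rfl | h2
  · exact hL.ge
  exact (hpos x ⟨h1, h2⟩).le

theorem IsPosSol.unique {L d τ : ℝ} (hL : 0 < L) (hd : 0 < d) (hτ : 0 < τ) {f : ℝ → ℝ → ℝ}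
    {H : ℝ → ℝ} (hf : ContDiff ℝ 2 (Function.uncurry f))
    (hfu : ∀ p ≥ (0:ℝ), ∀ q ≥ (0:ℝ), deriv (fun s => f s q) p < 0)
    (hfv : ∀ p ≥ (0:ℝ), ∀ q ≥ (0:ℝ), deriv (f p) q < 0)
    (hH : ContDiff ℝ 2 H) (hH' : ∀ p ≥ (0:ℝ), 0 < deriv H p) {u v u' v' : ℝ → ℝ}
    (h : IsPosSol L d τ f H u v) (h' : IsPosSol L d τ f H u' v') :
    EqOn u' u (Icc 0 L) ∧ EqOn v' v (Icc 0 L) := by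
  obtain ⟨hu, hv, upos, vpos, equ, eqv, u0, uL, v0, vL⟩ := h
  obtain ⟨hu', hv', upos', vpos', equ', eqv', u0', uL', v0', vL'⟩ := h'
  obtain ⟨R, hR⟩ := (isCompact_Icc (a := (0:ℝ)) (b := L)).exists_bound_of_continuousOn
    (f := fun x => (u x, v x, u' x, v' x))
    (hu.continuousOn.prodMk (hv.continuousOn.prodMk (hu'.continuousOn.prodMk hv'.continuousOn)))
  have hRb : ∀ x ∈ Icc 0 L, u x ∈ Icc 0 R ∧ v x ∈ Icc 0 R ∧ u' x ∈ Icc 0 R ∧ v' x ∈ Icc 0 R := by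
    intro x hx
    have := hR x hx
    simp only [Prod.norm_def, sup_le_iff, Real.norm_eq_abs] at this
    exact ⟨⟨nonneg_on_Icc u0 uL upos x hx, (le_abs_self _).trans this.1⟩,
      ⟨nonneg_on_Icc v0 vL vpos x hx, (le_abs_self _).trans this.2.1⟩,
      ⟨nonneg_on_Icc u0' uL' upos' x hx, (le_abs_self _).trans this.2.2.1⟩,
      ⟨nonneg_on_Icc v0' vL' vpos' x hx, (le_abs_self _).trans this.2.2.2⟩⟩
  obtain ⟨C, hC⟩ := ((isCompact_Icc (a := (0:ℝ)) (b := R)).prod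
    (isCompact_Icc (a := (0:ℝ)) (b := R))).exists_bound_of_continuousOn
    (f := fun z : ℝ × ℝ => (f z.1 z.2, deriv (fun s => f s z.2) z.1, deriv (f z.1) z.2,
      deriv H z.1)) (Continuous.continuousOn (hf.continuous.prodMk
        ((continuous_deriv_fst hf).prodMk ((continuous_deriv_snd hf).prodMk
          ((hH.continuous_deriv (by norm_num)).comp continuous_fst)))))
  have hCb : ∀ p ∈ Icc 0 R, ∀ q ∈ Icc 0 R, |f p q| ≤ C ∧ |deriv (fun s => f s q) p| ≤ C ∧
      |deriv (f p) q| ≤ C ∧ |deriv H p| ≤ C := by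
    intro p hp q hq
    simpa only [Prod.norm_def, sup_le_iff, Real.norm_eq_abs] using hC (p, q) ⟨hp, hq⟩
  have hmvt : ∀ x, ∃ ξ η ζ : ℝ, x ∈ Icc 0 L → ξ ∈ Icc 0 R ∧ η ∈ Icc 0 R ∧ ζ ∈ Icc 0 R ∧
      f (u' x) (v' x) - f (u x) (v' x) = deriv (fun s => f s (v' x)) ξ * (u' x - u x) ∧
      f (u x) (v' x) - f (u x) (v x) = deriv (f (u x)) η * (v' x - v x) ∧
      H (u' x) - H (u x) = deriv H ζ * (u' x - u x) := by
    intro x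
    by_cases hx : x ∈ Icc 0 L
    · obtain ⟨a1, a2, a3, a4⟩ := hRb x hx
      obtain ⟨ξ, h1, h1'⟩ := exists_sub_eq_deriv_mul (g := fun s => f s (v' x))
        (fun p => (hasDerivAt_fst_slice hf p (v' x)).differentiableAt) a3 a1
      obtain ⟨η, h2, h2'⟩ := exists_sub_eq_deriv_mul (g := f (u x))
        (fun q => (hasDerivAt_snd_slice hf (u x) q).differentiableAt) a4 a2
      obtain ⟨ζ, h3, h3'⟩ := exists_sub_eq_deriv_mul (hH.differentiable (by norm_num)) a3 a1
      exact ⟨ξ, η, ζ, fun _ => ⟨h1, h2, h3, h1', h2', h3'⟩⟩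
    · exact ⟨0, 0, 0, fun h => absurd h hx⟩
  choose ξ η ζ hmvt using hmvt
  have Du := TwiceDiffOn.of_contDiffOn hL hu
  have Dv := TwiceDiffOn.of_contDiffOn hL hv
  have Du' := TwiceDiffOn.of_contDiffOn hL hu'
  have Dv' := TwiceDiffOn.of_contDiffOn hL hv'
  have hsys : SignedSystem L ((C + R * C + R * C) / d + 1 / (d * τ) + C / (d * τ))
      (fun x => f (u' x) (v' x) / d)
      (fun x => -(u x * deriv (fun s => f s (v' x)) (ξ x)) / d)
      (fun x => -(u x * deriv (f (u x)) (η x)) / d) (fun _ => 1 / (d * τ))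
      (fun x => deriv H (ζ x) / (d * τ)) u' (derivWithin u' (Icc 0 L))
      (fun x => u' x - u x) (fun x => derivWithin u' (Icc 0 L) x - derivWithin u (Icc 0 L) x)
      (fun x => v' x - v x) (fun x => derivWithin v' (Icc 0 L) x - derivWithin v (Icc 0 L) x) := by
    have bd : ∀ x ∈ Ioo 0 L, 0 ≤ C ∧ 0 ≤ R ∧ |f (u' x) (v' x)| ≤ C ∧
        |u x * deriv (fun s => f s (v' x)) (ξ x)| ≤ R * C ∧
        |u x * deriv (f (u x)) (η x)| ≤ R * C ∧ |deriv H (ζ x)| ≤ C := by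
      intro x hx
      have hx' := Ioo_subset_Icc_self hx
      obtain ⟨a1, a2, a3, a4⟩ := hRb x hx'
      obtain ⟨h1, h2, h3, _⟩ := hmvt x hx'
      have hR0 : 0 ≤ R := a1.1.trans a1.2
      have hu0 : |u x| ≤ R := by rw [abs_of_nonneg a1.1]; exact a1.2
      refine ⟨(abs_nonneg _).trans (hCb _ a1 _ a1).1, hR0, (hCb _ a3 _ a4).1, ?_, ?_,
        (hCb _ h3 _ h3).2.2.2⟩
      · rw [abs_mul]
        exact mul_le_mul hu0 (hCb _ h1 _ a4).2.1 (abs_nonneg _) hR0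
      · rw [abs_mul]
        exact mul_le_mul hu0 (hCb _ a1 _ h2).2.2.1 (abs_nonneg _) hR0
    constructor
    · refine Du'.congr_deriv₂ fun x hx => ?_
      have := equ' x hx
      field_simp
      linarith
    · exact upos'
    · refine (Du'.sub Du).congr_deriv₂ fun x hx => ?_
      have e1 := equ' x hx
      have e2 := equ x hx
      obtain ⟨_, _, _, m1, m2, _⟩ := hmvt x (Ioo_subset_Icc_self hx)
      field_simp
      linear_combination -e1 + e2 - u x * m1 - u x * m2
    · refine (Dv'.sub Dv).congr_deriv₂ fun x hx => ?_
      have e1 := eqv' x hx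
      have e2 := eqv x hx
      obtain ⟨_, _, _, _, _, m3⟩ := hmvt x (Ioo_subset_Icc_self hx)
      field_simp at e1 e2 ⊢
      linear_combination -e1 + e2 - m3
    · intro x hx
      have hx' := Ioo_subset_Icc_self hx
      have := mul_neg_of_pos_of_neg (upos x hx) (hfu _ (hmvt x hx').1.1 _ (hRb x hx').2.2.2.1)
      exact div_pos (by linarith) hd
    · intro x hx
      have hx' := Ioo_subset_Icc_self hx
      have := mul_neg_of_pos_of_neg (upos x hx) (hfv _ (hRb x hx').1.1 _ (hmvt x hx').2.1.1)
      exact div_pos (by linarith) hd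
    · intro x _
      positivity
    · intro x hx
      have hx' := Ioo_subset_Icc_self hx
      exact div_pos (hH' _ (hmvt x hx').2.2.1.1) (by positivity)
    · intro x hx
      obtain ⟨hC0, hR0, b1, b2, b3, b4⟩ := bd x hx
      have hdτ : 0 ≤ 1 / (d * τ) + C / (d * τ) := by positivity
      have hRC : 0 ≤ R * C := by positivity
      have : |(-(u x * deriv (fun s => f s (v' x)) (ξ x)) / d) - f (u' x) (v' x) / d| ≤
          (C + R * C + R * C) / d := by
        rw [← sub_div, abs_div, abs_of_pos hd]
        gcongr
        rw [abs_le] at *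
        constructor <;> linarith [b1.1, b1.2, b2.1, b2.2]
      linarith
    · intro x hx
      obtain ⟨hC0, hR0, b1, b2, b3, b4⟩ := bd x hx
      have hdτ : 0 ≤ 1 / (d * τ) + C / (d * τ) := by positivity
      have hRC : 0 ≤ R * C := by positivity
      have : -(u x * deriv (f (u x)) (η x)) / d ≤ (C + R * C + R * C) / d := by
        gcongr
        linarith [(abs_le.1 b3).1]
      linarith
    · intro x hx
      obtain ⟨hC0, hR0, _⟩ := bd x hx
      have : 0 ≤ (C + R * C + R * C) / d + C / (d * τ) := by positivity
      linarith
    · intro x hx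
      obtain ⟨hC0, hR0, b1, b2, b3, b4⟩ := bd x hx
      have : 0 ≤ (C + R * C + R * C) / d + 1 / (d * τ) := by positivity
      have : deriv H (ζ x) / (d * τ) ≤ C / (d * τ) := by
        gcongr
        exact (abs_le.1 b4).2
      linarith
  have := hsys.eq_zero (by simp [u0, u0']) (by simp [uL, uL']) (by simp [v0, v0'])
    (by simp [vL, vL'])
  exact ⟨fun x hx => sub_eq_zero.1 (this x hx).1, fun x hx => sub_eq_zero.1 (this x hx).2⟩

theorem IsPosSol.nonDeg {L d τ : ℝ} (hL : 0 < L) (hd : 0 < d) (hτ : 0 < τ) {f : ℝ → ℝ → ℝ}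
    {H : ℝ → ℝ} (hf : ContDiff ℝ 2 (Function.uncurry f))
    (hfu : ∀ p ≥ (0:ℝ), ∀ q ≥ (0:ℝ), deriv (fun s => f s q) p < 0)
    (hfv : ∀ p ≥ (0:ℝ), ∀ q ≥ (0:ℝ), deriv (f p) q < 0)
    (hH : ContDiff ℝ 2 H) (hH' : ∀ p ≥ (0:ℝ), 0 < deriv H p) {u v : ℝ → ℝ}
    (h : IsPosSol L d τ f H u v) : NonDeg L d τ f H u v := by
  obtain ⟨hu, hv, upos, vpos, equ, eqv, u0, uL, v0, vL⟩ := h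
  intro φ ψ hφ hψ eφ eψ φ0 φL ψ0 ψL
  have huv : ContinuousOn (fun x => (u x, v x)) (Icc 0 L) :=
    hu.continuousOn.prodMk hv.continuousOn
  have c1 : ContinuousOn (fun x => f (u x) (v x)) (Icc 0 L) := hf.continuous.comp_continuousOn huv
  have c2 : ContinuousOn (fun x => u x * deriv (fun s => f s (v x)) (u x)) (Icc 0 L) :=
    hu.continuousOn.mul ((continuous_deriv_fst hf).comp_continuousOn huv)
  have c3 : ContinuousOn (fun x => u x * deriv (f (u x)) (v x)) (Icc 0 L) :=
    hu.continuousOn.mul ((continuous_deriv_snd hf).comp_continuousOn huv)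
  have c4 : ContinuousOn (fun x => deriv H (u x)) (Icc 0 L) :=
    (hH.continuous_deriv (by norm_num)).comp_continuousOn hu.continuousOn
  obtain ⟨M, hM⟩ := (isCompact_Icc (a := (0:ℝ)) (b := L)).exists_bound_of_continuousOn
    (f := fun x => (-(u x * deriv (fun s => f s (v x)) (u x)) / d - f (u x) (v x) / d,
      -(u x * deriv (f (u x)) (v x)) / d, 1 / (d * τ), deriv H (u x) / (d * τ)))
    (((c2.neg.div_const d).sub (c1.div_const d)).prodMk ((c3.neg.div_const d).prodMk
      (continuousOn_const.prodMk (c4.div_const (d * τ)))))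
  have hMb : ∀ x ∈ Ioo 0 L, |-(u x * deriv (fun s => f s (v x)) (u x)) / d - f (u x) (v x) / d|
      ≤ M ∧ |-(u x * deriv (f (u x)) (v x)) / d| ≤ M ∧ |1 / (d * τ)| ≤ M ∧
      |deriv H (u x) / (d * τ)| ≤ M := fun x hx => by
    simpa only [Prod.norm_def, sup_le_iff, Real.norm_eq_abs] using hM x (Ioo_subset_Icc_self hx)
  have hsys : SignedSystem L M (fun x => f (u x) (v x) / d)
      (fun x => -(u x * deriv (fun s => f s (v x)) (u x)) / d)
      (fun x => -(u x * deriv (f (u x)) (v x)) / d) (fun _ => 1 / (d * τ))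
      (fun x => deriv H (u x) / (d * τ)) u (derivWithin u (Icc 0 L))
      φ (derivWithin φ (Icc 0 L)) ψ (derivWithin ψ (Icc 0 L)) := by
    constructor
    · refine (TwiceDiffOn.of_contDiffOn hL hu).congr_deriv₂ fun x hx => ?_
      have := equ x hx
      field_simp
      linarith
    · exact upos
    · refine (TwiceDiffOn.of_contDiffOn hL hφ).congr_deriv₂ fun x hx => ?_
      have := eφ x hx
      field_simp
      linear_combination -this
    · refine (TwiceDiffOn.of_contDiffOn hL hψ).congr_deriv₂ fun x hx => ?_
      have := eψ x hx
      field_simp at this ⊢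
      linear_combination -this
    · intro x hx
      have := mul_neg_of_pos_of_neg (upos x hx) (hfu _ (upos x hx).le _ (vpos x hx).le)
      exact div_pos (by linarith) hd
    · intro x hx
      have := mul_neg_of_pos_of_neg (upos x hx) (hfv _ (upos x hx).le _ (vpos x hx).le)
      exact div_pos (by linarith) hd
    · intro x _
      positivity
    · exact fun x hx => div_pos (hH' _ (upos x hx).le) (by positivity)
    · exact fun x hx => (hMb x hx).1
    · exact fun x hx => (le_abs_self _).trans (hMb x hx).2.1
    · exact fun x hx => (le_abs_self _).trans (hMb x hx).2.2.1
    · exact fun x hx => (le_abs_self _).trans (hMb x hx).2.2.2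
  exact hsys.eq_zero φ0 φL ψ0 ψL

theorem twiceDiffOn_sin (L : ℝ) : TwiceDiffOn 0 L (fun x => sin (π / L * x))
    (fun x => π / L * cos (π / L * x)) (fun x => -((π / L) ^ 2 * sin (π / L * x))) := by
  have hd : ∀ x : ℝ, HasDerivAt (fun x => π / L * x) (π / L) x := fun x => by
    simpa using (hasDerivAt_id x).const_mul (π / L)
  refine ⟨by fun_prop, by fun_prop, fun x _ => ?_, fun x _ => ?_⟩
  · exact ((hasDerivAt_sin _).comp x (hd x)).congr_deriv (by ring)
  · exact (((hasDerivAt_cos _).comp x (hd x)).const_mul (π / L)).congr_deriv (by ring)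

theorem sin_scaled_pos {L : ℝ} (hL : 0 < L) {x : ℝ} (hx : x ∈ Ioo 0 L) :
    0 < sin (π / L * x) := by
  refine sin_pos_of_pos_of_lt_pi (mul_pos (div_pos pi_pos hL) hx.1) ?_
  rw [div_mul_eq_mul_div, div_lt_iff₀ hL]
  exact mul_lt_mul_of_pos_left hx.2 pi_pos

theorem sin_scaled_right {L : ℝ} (hL : 0 < L) : sin (π / L * L) = 0 := by
  rw [div_mul_cancel₀ _ hL.ne', sin_pi]

theorem lt_value_at_zero {f : ℝ → ℝ → ℝ} (hf : ContDiff ℝ 2 (Function.uncurry f))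
    (hfu : ∀ p ≥ (0:ℝ), ∀ q ≥ (0:ℝ), deriv (fun s => f s q) p < 0)
    (hfv : ∀ p ≥ (0:ℝ), ∀ q ≥ (0:ℝ), deriv (f p) q < 0) {p q : ℝ} (hp : 0 < p) (hq : 0 ≤ q) :
    f p q < f 0 0 := by
  obtain ⟨ξ, hξ, h1⟩ := exists_sub_eq_deriv_mul (g := fun s => f s q) (R := p)
    (fun r => (hasDerivAt_fst_slice hf r q).differentiableAt) ⟨hp.le, le_rfl⟩ ⟨le_rfl, hp.le⟩
  obtain ⟨η, hη, h2⟩ := exists_sub_eq_deriv_mul (g := f 0) (R := q)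
    (fun r => (hasDerivAt_snd_slice hf 0 r).differentiableAt) ⟨hq, le_rfl⟩ ⟨le_rfl, hq⟩
  have h3 := mul_neg_of_neg_of_pos (hfu ξ hξ.1 q hq) hp
  have h4 := mul_nonpos_of_nonpos_of_nonneg (hfv 0 le_rfl η hη.1).le hq
  simp only [sub_zero] at h1 h2
  linarith

theorem IsPosSol.lt_threshold {L d τ : ℝ} (hL : 0 < L) (hd : 0 < d) {f : ℝ → ℝ → ℝ}
    {H : ℝ → ℝ} (hf : ContDiff ℝ 2 (Function.uncurry f))
    (hfu : ∀ p ≥ (0:ℝ), ∀ q ≥ (0:ℝ), deriv (fun s => f s q) p < 0)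
    (hfv : ∀ p ≥ (0:ℝ), ∀ q ≥ (0:ℝ), deriv (f p) q < 0) {u v : ℝ → ℝ}
    (h : IsPosSol L d τ f H u v) : d < f 0 0 * L ^ 2 / π ^ 2 := by
  obtain ⟨hu, hv, upos, vpos, equ, eqv, u0, uL, v0, vL⟩ := h
  by_contra! hle
  have hle' : f 0 0 ≤ d * (π / L) ^ 2 := by
    rw [div_le_iff₀ (by positivity)] at hle
    rw [div_pow, mul_div_assoc', le_div_iff₀ (by positivity)]
    exact hle
  refine (TwiceDiffOn.of_contDiffOn hL hu).wronskian_false (twiceDiffOn_sin L) hL u0 uL upos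
    (by simp) (sin_scaled_right hL).ge (fun x hx => ?_)
  have hs := sin_scaled_pos hL hx
  have h1 := lt_value_at_zero hf hfu hfv (upos x hx) (vpos x hx).le
  have h2 : -deriv (deriv u) x < u x * (π / L) ^ 2 := by
    refine lt_of_mul_lt_mul_left ?_ hd.le
    have := mul_lt_mul_of_pos_left (h1.trans_le hle') (upos x hx)
    linarith [equ x hx]
  nlinarith [mul_lt_mul_of_pos_right h2 hs]

section Nemytskii

open scoped Topology

variable {Ω V W : Type*} [TopologicalSpace Ω] [CompactSpace Ω] [NormedAddCommGroup V]
  [NormedSpace ℝ V] [NormedAddCommGroup W] [NormedSpace ℝ W]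

/-- Pointwise application of a continuous family of continuous linear maps. -/
noncomputable def pointwiseCLM (A : C(Ω, V →L[ℝ] W)) : C(Ω, V) →L[ℝ] C(Ω, W) :=
  LinearMap.mkContinuous
    { toFun := fun h => ⟨fun x => A x (h x), A.continuous.clm_apply h.continuous⟩
      map_add' := fun h k => by ext x; simp
      map_smul' := fun c h => by ext x; simp } ‖A‖
    (fun h => (ContinuousMap.norm_le _ (by positivity)).2 fun x =>
      (A x).le_of_opNorm_le_of_le (A.norm_coe_le_norm x) (h.norm_coe_le_norm x))

@[simp]
theorem pointwiseCLM_apply (A : C(Ω, V →L[ℝ] W)) (h : C(Ω, V)) (x : Ω) :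
    pointwiseCLM A h x = A x (h x) := rfl

/-- Superposition operators of continuously differentiable maps are strictly differentiable on
spaces of continuous functions. -/
theorem hasStrictFDerivAt_superposition {n : V → W} (hn : ContDiff ℝ 1 n) (y : C(Ω, V)) :
    HasStrictFDerivAt (fun y : C(Ω, V) => (⟨n, hn.continuous⟩ : C(V, W)).comp y)
      (pointwiseCLM ⟨fun x => fderiv ℝ n (y x),
        (hn.continuous_fderiv one_ne_zero).comp y.continuous⟩) y := by
  refine HasStrictFDerivAt.of_isLittleO (Asymptotics.isLittleO_iff.2 fun c hc => ?_)
  have hK : IsCompact (range y) := isCompact_range y.continuous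
  have hU := hK.uniformContinuousAt_of_continuousAt (fderiv ℝ n)
    (fun a _ => (hn.continuous_fderiv one_ne_zero).continuousAt) (Metric.dist_mem_uniformity hc)
  obtain ⟨δ, hδ, hδU⟩ := Metric.mem_uniformity_dist.1 hU
  have hball : Metric.ball y δ ×ˢ Metric.ball y δ ∈ 𝓝 (y, y) :=
    prod_mem_nhds (Metric.ball_mem_nhds y hδ) (Metric.ball_mem_nhds y hδ)
  filter_upwards [hball] with ab hab
  refine (ContinuousMap.norm_le _ (by positivity)).2 fun x => ?_
  have hmem : ∀ a : C(Ω, V), a ∈ Metric.ball y δ → a x ∈ Metric.ball (y x) δ := fun a ha =>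
    (ContinuousMap.dist_apply_le_dist x).trans_lt ha
  have hle := (convex_ball (y x) δ).norm_image_sub_le_of_norm_fderiv_le' (𝕜 := ℝ) (f := n)
    (φ := fderiv ℝ n (y x)) (C := c)
    (fun z _ => hn.differentiable one_ne_zero z)
    (fun z hz => by
      have h1 := @hδU (y x) z (by rw [dist_comm]; exact hz) ⟨x, rfl⟩
      rw [← dist_eq_norm, dist_comm]
      exact (show dist _ _ < c from h1).le)
    (hmem _ hab.2) (hmem _ hab.1)
  refine hle.trans ?_
  gcongr
  exact (ab.1 - ab.2).norm_coe_le_norm x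

end Nemytskii

section Continuation

open scoped Topology

variable {Ω W : Type*} [TopologicalSpace Ω] [CompactSpace Ω] [NormedAddCommGroup W]
  [NormedSpace ℝ W]

/-- The map `(w, s) ↦ (x ↦ (s, w x))`. -/
noncomputable def withParam : C(Ω, W) × ℝ →L[ℝ] C(Ω, ℝ × W) :=
  LinearMap.mkContinuous
    { toFun := fun ws => ⟨fun x => (ws.2, ws.1 x), by fun_prop⟩
      map_add' := fun h k => by ext x <;> simp
      map_smul' := fun c h => by ext x <;> simp } 1
    (fun h => (ContinuousMap.norm_le _ (by positivity)).2 fun x => by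
      rw [one_mul]
      exact max_le (le_max_right _ _) ((h.1.norm_coe_le_norm x).trans (le_max_left _ _)))

/-- The map `y ↦ (x ↦ (a x, y x))`. -/
noncomputable def withBase (V : Type*) [NormedAddCommGroup V] [NormedSpace ℝ V] :
    C(Ω, V) →L[ℝ] C(Ω, ℝ × V) :=
  LinearMap.mkContinuous
    { toFun := fun y => ⟨fun x => (0, y x), by fun_prop⟩
      map_add' := fun h k => by ext x <;> simp
      map_smul' := fun c h => by ext x <;> simp } 1
    (fun h => (ContinuousMap.norm_le _ (by positivity)).2 fun x => by
      rw [one_mul]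
      exact max_le (by simp) (h.norm_coe_le_norm x))

/-- The superposition operator `(w, s) ↦ (x ↦ n (a x, s, w x))`. -/
def paramSuperposition (a : C(Ω, ℝ)) (n : C(ℝ × ℝ × W, W)) (w : C(Ω, W)) (s : ℝ) : C(Ω, W) :=
  ⟨fun x => n (a x, s, w x), by fun_prop⟩

theorem continuous_paramSuperposition (a : C(Ω, ℝ)) (n : C(ℝ × ℝ × W, W)) :
    Continuous fun ws : C(Ω, W) × ℝ => paramSuperposition a n ws.1 ws.2 := by
  have h : (fun ws : C(Ω, W) × ℝ => paramSuperposition a n ws.1 ws.2) =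
      fun ws => n.comp (withBase _ (withParam ws) + ⟨fun x => (a x, 0), by fun_prop⟩) := by
    funext ws
    ext x
    simp [paramSuperposition, withBase, withParam]
  rw [h]
  have h2 : Continuous fun ws : C(Ω, W) × ℝ => (withBase _ (withParam ws) +
      ⟨fun x => (a x, 0), by fun_prop⟩ : C(Ω, ℝ × ℝ × W)) := by fun_prop
  exact n.continuous_postcomp.comp h2

/-- Local continuation of solutions of `w = T (n (·, s, w))` at a solution with injective
linearization. -/
theorem eventually_exists_fixedPoint [CompleteSpace W] (T : C(Ω, W) →L[ℝ] C(Ω, W))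
    (hT : IsCompactOperator T)
    (a : C(Ω, ℝ)) {n : C(ℝ × ℝ × W, W)} (hn : ContDiff ℝ 1 n) {w₀ : C(Ω, W)} {s₀ : ℝ}
    (hw₀ : w₀ = T (paramSuperposition a n w₀ s₀))
    (hinj : ∀ h g : C(Ω, W), (∀ x, g x = fderiv ℝ n (a x, s₀, w₀ x) (0, 0, h x)) → h = T g → h = 0)
    {U : Set C(Ω, W)} (hU : U ∈ 𝓝 w₀) :
    ∀ᶠ s in 𝓝 s₀, ∃ w ∈ U, w = T (paramSuperposition a n w s) := by
  set b : C(Ω, ℝ × ℝ × W) := ⟨fun x => (a x, 0), by fun_prop⟩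
  set ι : C(Ω, W) × ℝ →L[ℝ] C(Ω, ℝ × ℝ × W) := (withBase _).comp withParam
  set D : C(Ω, ℝ × ℝ × W) →L[ℝ] C(Ω, W) :=
    pointwiseCLM ⟨fun x => fderiv ℝ n ((ι (w₀, s₀) + b) x),
      (hn.continuous_fderiv one_ne_zero).comp (ι (w₀, s₀) + b).continuous⟩ with hD
  have hsup : HasStrictFDerivAt (fun ws : C(Ω, W) × ℝ => paramSuperposition a n ws.1 ws.2)
      (D.comp ι) (w₀, s₀) := by
    have h : (fun ws : C(Ω, W) × ℝ => paramSuperposition a n ws.1 ws.2) =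
        fun ws => (⟨n, hn.continuous⟩ : C(_, W)).comp (ι ws + b) := by
      funext ws
      ext x
      simp [paramSuperposition, withBase, withParam, ι, b]
    rw [h]
    exact (hasStrictFDerivAt_superposition hn (ι (w₀, s₀) + b)).comp (w₀, s₀)
      (ι.hasStrictFDerivAt.add_const b)
  set Φ : C(Ω, W) × ℝ → C(Ω, W) × ℝ :=
    fun ws => (ws.1 - T (paramSuperposition a n ws.1 ws.2), ws.2) with hΦ
  set Φ' : C(Ω, W) × ℝ →L[ℝ] C(Ω, W) × ℝ :=
    (ContinuousLinearMap.fst ℝ _ _ - T.comp (D.comp ι)).prod (ContinuousLinearMap.snd ℝ _ _)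
  have hΦd : HasStrictFDerivAt Φ Φ' (w₀, s₀) :=
    (hasStrictFDerivAt_fst.sub (T.hasStrictFDerivAt.comp (w₀, s₀) hsup)).prodMk
      hasStrictFDerivAt_snd
  set A : C(Ω, W) →L[ℝ] C(Ω, W) :=
    T.comp ((D.comp ι).comp (ContinuousLinearMap.inl ℝ _ _)) with hA
  have hAc : IsCompactOperator A := hT.comp_clm _
  have hunit : IsUnit (1 - A) := by
    rcases IsCompactOperator.hasEigenvalue_or_mem_resolventSet hAc (one_ne_zero (α := ℝ)) with h | h
    · exfalso
      obtain ⟨v, hv⟩ := h.exists_hasEigenvector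
      refine hv.2 (hinj v (D (ι (v, 0))) (fun x => ?_) ?_)
      · simp [hD, ι, b, withBase, withParam]
      · have := hv.apply_eq_smul
        rw [one_smul] at this
        exact this.symm
    · rw [spectrum.mem_resolventSet_iff] at h
      simpa using h
  have hrange : Φ'.range = ⊤ := by
    refine LinearMap.range_eq_top.2 ?_
    rintro ⟨e, σ⟩
    obtain ⟨B, hB⟩ := hunit.exists_right_inv
    have hB' : ∀ z, B z - A (B z) = z := fun z => by
      simpa using congrArg (fun F : C(Ω, W) →L[ℝ] C(Ω, W) => F z) hB
    obtain ⟨y, hy⟩ : ∃ y, y - A y = e + T (D (ι (0, σ))) := ⟨_, hB' _⟩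
    refine ⟨(y, σ), Prod.ext ?_ rfl⟩
    have hsplit : ((y, σ) : C(Ω, W) × ℝ) = (y, 0) + (0, σ) := by simp
    change y - T (D (ι (y, σ))) = e
    rw [hsplit, map_add, map_add, map_add, ← sub_sub]
    change y - A y - T (D (ι (0, σ))) = e
    rw [hy, add_sub_cancel_right]
  have hmap := hΦd.map_nhds_eq_of_surj hrange
  have hΦ0 : Φ (w₀, s₀) = (0, s₀) := Prod.ext (sub_eq_zero.2 hw₀) rfl
  have himg : Φ '' (U ×ˢ univ) ∈ 𝓝 ((0, s₀) : C(Ω, W) × ℝ) := by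
    rw [← hΦ0, ← hmap]
    exact Filter.image_mem_map (prod_mem_nhds hU Filter.univ_mem)
  have hcont : Filter.Tendsto (fun s : ℝ => ((0, s) : C(Ω, W) × ℝ)) (𝓝 s₀) (𝓝 (0, s₀)) :=
    (Continuous.prodMk_right 0).tendsto s₀
  filter_upwards [hcont himg] with s hs
  obtain ⟨⟨w, s'⟩, ⟨hw, _⟩, he⟩ := hs
  have h1 := congrArg Prod.fst he
  have h2 : s' = s := congrArg Prod.snd he
  subst h2
  exact ⟨w, hw, sub_eq_zero.1 h1⟩

/-- The parameters in a compact interval for which a closed bounded set contains a solution form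
a closed set. -/
theorem isClosed_fixedPoint_params [ProperSpace W] (T : C(Ω, W) →L[ℝ] C(Ω, W))
    (hT : IsCompactOperator T) (a : C(Ω, ℝ)) (n : C(ℝ × ℝ × W, W)) {Q : Set C(Ω, W)}
    (hQ : IsClosed Q) {R : ℝ} (hR : ∀ w ∈ Q, ‖w‖ ≤ R) (s₁ s₂ : ℝ) :
    IsClosed ({s | ∃ w ∈ Q, w = T (paramSuperposition a n w s)} ∩ Icc s₁ s₂) := by
  obtain ⟨C, hC⟩ := ((isCompact_closedBall (0 : ℝ) ‖a‖).prod
    ((isCompact_Icc (a := s₁) (b := s₂)).prod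
      (isCompact_closedBall (0 : W) R))).exists_bound_of_continuousOn n.continuous.continuousOn
  obtain ⟨K, hK, hKsub⟩ := hT.image_closedBall_subset_compact (𝕜₁ := ℝ) (f := T.toLinearMap)
    (max C 0)
  set Z : Set (C(Ω, W) × ℝ) :=
    {ws | ws.1 ∈ Q ∧ ws.2 ∈ Icc s₁ s₂ ∧ ws.1 = T (paramSuperposition a n ws.1 ws.2)}
  have hZcl : IsClosed Z := by
    refine (hQ.preimage continuous_fst).inter ((isClosed_Icc.preimage continuous_snd).inter ?_)
    exact isClosed_eq continuous_fst (T.continuous.comp (continuous_paramSuperposition a n))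
  have hZsub : Z ⊆ K ×ˢ Icc s₁ s₂ := by
    rintro ⟨w, s⟩ ⟨hw, hs, he⟩
    refine ⟨?_, hs⟩
    change w = T (paramSuperposition a n w s) at he
    change w ∈ K
    rw [he]
    refine hKsub ⟨_, ?_, rfl⟩
    rw [mem_closedBall_zero_iff]
    refine (ContinuousMap.norm_le _ (le_max_right _ _)).2 fun x => ?_
    refine (hC (a x, s, w x) ⟨?_, hs, ?_⟩).trans (le_max_left _ _)
    · simpa using a.norm_coe_le_norm x
    · simpa using (w.norm_coe_le_norm x).trans (hR w hw)
  have hZc : IsCompact Z := (hK.prod isCompact_Icc).of_isClosed_subset hZcl hZsub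
  convert (hZc.image continuous_snd).isClosed using 1
  ext s
  constructor
  · rintro ⟨⟨w, hw, he⟩, hs⟩
    exact ⟨(w, s), ⟨hw, hs, he⟩, rfl⟩
  · rintro ⟨⟨w, s'⟩, ⟨hw, hs, he⟩, rfl⟩
    exact ⟨⟨w, hw, he⟩, hs⟩

end Continuation

section Green

open scoped Topology

variable {W : Type*} [NormedAddCommGroup W] {L : ℝ}

theorem norm_iccExtend_le (hL : 0 ≤ L) (g : C(Icc 0 L, W)) (t : ℝ) :
    ‖IccExtend hL g t‖ ≤ ‖g‖ := g.norm_coe_le_norm _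

theorem continuous_iccExtend (hL : 0 ≤ L) (g : C(Icc 0 L, W)) : Continuous (IccExtend hL g) :=
  g.continuous.Icc_extend'

theorem intervalIntegrable_iccExtend (hL : 0 ≤ L) (g : C(Icc 0 L, W)) (a b : ℝ) :
    IntervalIntegrable (IccExtend hL g) MeasureTheory.volume a b :=
  (continuous_iccExtend hL g).intervalIntegrable a b

variable [NormedSpace ℝ W]

/-- The primitive vanishing at `0`, as an operator on `C([0, L])`. -/
noncomputable def primitiveCLM (W : Type*) [NormedAddCommGroup W] [NormedSpace ℝ W]
    (hL : 0 ≤ L) : C(Icc 0 L, W) →L[ℝ] C(Icc 0 L, W) :=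
  LinearMap.mkContinuous
    { toFun := fun g => ⟨fun x => ∫ t in (0:ℝ)..x, IccExtend hL g t,
        (intervalIntegral.continuous_primitive
          (intervalIntegrable_iccExtend hL g) 0).comp continuous_subtype_val⟩
      map_add' := fun g k => by
        ext x
        exact intervalIntegral.integral_add (intervalIntegrable_iccExtend hL g 0 x)
          (intervalIntegrable_iccExtend hL k 0 x)
      map_smul' := fun c g => by
        ext x
        exact intervalIntegral.integral_smul c (IccExtend hL g) } L
    (fun g => (ContinuousMap.norm_le _ (by positivity)).2 fun x => by
      refine (intervalIntegral.norm_integral_le_of_norm_le_const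
        (fun t _ => norm_iccExtend_le hL g t)).trans ?_
      rw [sub_zero, abs_of_nonneg x.2.1, mul_comm]
      gcongr
      exact x.2.2)

theorem isCompactOperator_primitiveCLM [ProperSpace W] (hL : 0 ≤ L) :
    IsCompactOperator (primitiveCLM W hL) := by
  rw [isCompactOperator_iff_exists_mem_nhds_image_subset_compact]
  set A : Set (BoundedContinuousFunction (Icc 0 L) W) :=
    {F | (∀ x, F x ∈ Metric.closedBall (0 : W) L) ∧ LipschitzWith 1 F}
  have hA : IsCompact (closure A) := by
    refine BoundedContinuousFunction.arzela_ascoli _ (isCompact_closedBall (0 : W) L) A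
      (fun F x hF => hF.1 x) ?_
    exact (LipschitzWith.uniformEquicontinuous _ 1 fun F => F.2.2).equicontinuous
  refine ⟨Metric.ball 0 1, Metric.ball_mem_nhds _ one_pos, _,
    hA.image (ContinuousMap.linearIsometryBoundedOfCompact (Icc 0 L) W ℝ).symm.continuous, ?_⟩
  rintro _ ⟨g, hg, rfl⟩
  have hg1 : ‖g‖ ≤ 1 := by simpa using (mem_ball_zero_iff.1 hg).le
  refine ⟨ContinuousMap.linearIsometryBoundedOfCompact (Icc 0 L) W ℝ (primitiveCLM W hL g),
    subset_closure ⟨fun x => ?_, LipschitzWith.of_dist_le_mul fun x y => ?_⟩, by simp⟩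
  · rw [mem_closedBall_zero_iff]
    change ‖∫ t in (0:ℝ)..x, IccExtend hL g t‖ ≤ L
    refine (intervalIntegral.norm_integral_le_of_norm_le_const
        (fun t _ => (norm_iccExtend_le hL g t).trans hg1)).trans ?_
    rw [sub_zero, abs_of_nonneg x.2.1, one_mul]
    exact x.2.2
  · change dist (∫ t in (0:ℝ)..x, IccExtend hL g t) (∫ t in (0:ℝ)..y, IccExtend hL g t) ≤ _
    rw [dist_eq_norm, intervalIntegral.integral_interval_sub_left
      (intervalIntegrable_iccExtend hL g _ _) (intervalIntegrable_iccExtend hL g _ _)]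
    exact intervalIntegral.norm_integral_le_of_norm_le_const
        (fun t _ => (norm_iccExtend_le hL g t).trans hg1)

/-- Multiplication of a fixed vector by the linear function `x / L`. -/
noncomputable def rampCLM (W : Type*) [NormedAddCommGroup W] [NormedSpace ℝ W] (hL : 0 ≤ L) :
    W →L[ℝ] C(Icc 0 L, W) :=
  LinearMap.mkContinuous
    { toFun := fun w => ⟨fun x => ((x : ℝ) / L) • w, by fun_prop⟩
      map_add' := fun g k => by ext x; simp
      map_smul' := fun c w => by ext x; exact smul_comm _ _ _ } 1
    (fun w => (ContinuousMap.norm_le _ (by positivity)).2 fun x => by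
      change ‖((x : ℝ) / L) • w‖ ≤ _
      rw [norm_smul]
      gcongr
      rw [Real.norm_eq_abs, abs_of_nonneg (div_nonneg x.2.1 hL)]
      exact div_le_one_of_le₀ x.2.2 hL)

/-- The solution operator `g ↦ U` of `-U'' = g` on `[0, L]` with zero boundary values. -/
noncomputable def greenCLM (W : Type*) [NormedAddCommGroup W] [NormedSpace ℝ W] (hL : 0 ≤ L) :
    C(Icc 0 L, W) →L[ℝ] C(Icc 0 L, W) :=
  ((rampCLM W hL).comp (ContinuousMap.evalCLM ℝ (⟨L, hL, le_rfl⟩ : Icc 0 L)) -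
    ContinuousLinearMap.id ℝ _).comp ((primitiveCLM W hL).comp (primitiveCLM W hL))

theorem isCompactOperator_greenCLM [ProperSpace W] (hL : 0 ≤ L) :
    IsCompactOperator (greenCLM W hL) := by
  have h := IsCompactOperator.comp_clm (isCompactOperator_primitiveCLM (W := W) hL)
    (primitiveCLM W hL)
  exact h.clm_comp ((rampCLM W hL).comp (ContinuousMap.evalCLM ℝ (⟨L, hL, le_rfl⟩ : Icc 0 L)) -
    ContinuousLinearMap.id ℝ _)

theorem greenCLM_spec [CompleteSpace W] (hL : 0 < L) (g : C(Icc 0 L, W)) :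
    ∃ U U' : ℝ → W, (∀ x, HasDerivAt U (U' x) x) ∧
      (∀ x, HasDerivAt U' (-IccExtend hL.le g x) x) ∧ U 0 = 0 ∧ U L = 0 ∧
      ∀ x : Icc 0 L, greenCLM W hL.le g x = U x := by
  set P := primitiveCLM W hL.le
  set c : W := P (P g) ⟨L, hL.le, le_rfl⟩ with hc
  have hprim : ∀ (k : C(Icc 0 L, W)) (x : ℝ),
      HasDerivAt (fun y => ∫ t in (0:ℝ)..y, IccExtend hL.le k t) (IccExtend hL.le k x) x :=
    fun k x => intervalIntegral.integral_hasDerivAt_right (intervalIntegrable_iccExtend hL.le k 0 x)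
      ((continuous_iccExtend hL.le k).stronglyMeasurableAtFilter _ _)
      (continuous_iccExtend hL.le k).continuousAt
  set Q : ℝ → W := fun y => ∫ t in (0:ℝ)..y, IccExtend hL.le g t
  have hQ : Continuous Q :=
    continuous_iff_continuousAt.2 fun x => (hprim g x).continuousAt
  have hQ' : ∀ x, HasDerivAt (fun y => ∫ t in (0:ℝ)..y, Q t) (Q x) x :=
    fun x => intervalIntegral.integral_hasDerivAt_right (hQ.intervalIntegrable 0 x)
      (hQ.stronglyMeasurableAtFilter _ _) hQ.continuousAt
  have hPP : ∀ x : Icc 0 L, P (P g) x = ∫ t in (0:ℝ)..x, Q t := fun x => by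
    refine intervalIntegral.integral_congr fun t ht => ?_
    rw [uIcc_of_le x.2.1] at ht
    rw [IccExtend_of_mem hL.le _ ⟨ht.1, ht.2.trans x.2.2⟩]
    rfl
  refine ⟨fun x => (x / L) • c - ∫ t in (0:ℝ)..x, Q t, fun x => (1 / L) • c - Q x,
    fun x => ?_, fun x => ?_, ?_, ?_, fun x => ?_⟩
  · exact (((hasDerivAt_id x).div_const L).smul_const c).sub (hQ' x)
  · simpa using (hprim g x).const_sub ((1 / L) • c)
  · simp
  · have := hPP ⟨L, hL.le, le_rfl⟩
    simp only [← hc] at this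
    simp [← this, hL.ne']
  · change _ = ((x : ℝ) / L) • c - ∫ t in (0:ℝ)..x, Q t
    rw [← hPP x]
    rfl

end Green

namespace TwiceDiffOn

variable {a b : ℝ} {φ p A : ℝ → ℝ}

/-- Strong maximum principle for nonnegative solutions of `φ'' = -φ A`. -/
theorem pos_of_nonneg (h : TwiceDiffOn a b φ p (fun x => -(φ x * A x))) {M : ℝ}
    (hA : ∀ x ∈ Ioo a b, |A x| ≤ M) (hφ : ∀ x ∈ Icc a b, 0 ≤ φ x)
    {y : ℝ} (hy : y ∈ Icc a b) (hne : φ y ≠ 0) : ∀ x ∈ Ioo a b, 0 < φ x := by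
  intro x hx
  refine lt_of_le_of_ne (hφ x (Ioo_subset_Icc_self hx)) fun h0 => hne ?_
  have hp : p x = 0 := h.deriv_eq_zero_of_min hx fun z hz => h0 ▸ hφ z hz
  have hb : ∀ z ∈ Ioo a b, |-(φ z * A z)| ≤ M * (|φ z| + |φ z|) := fun z hz => by
    have hM := (abs_nonneg _).trans (hA z hz)
    rw [abs_neg, abs_mul]
    nlinarith [mul_le_mul_of_nonneg_left (hA z hz) (abs_nonneg (φ z)), abs_nonneg (φ z),
      mul_nonneg hM (abs_nonneg (φ z))]
  rcases le_total y x with hyx | hyx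
  · have h' := h.mono le_rfl hx.2.le
    exact (h'.eq_zero_of_right h' (fun z hz => hb z ⟨hz.1, hz.2.trans hx.2⟩)
      (fun z hz => hb z ⟨hz.1, hz.2.trans hx.2⟩) h0.symm hp h0.symm hp y ⟨hy.1, hyx⟩).1
  · have h' := (h.mono hx.1.le le_rfl).reflect rfl
    have hb' : ∀ z ∈ Ioo x b, x + b - z ∈ Ioo a b := fun z hz =>
      ⟨by linarith [hz.2, hx.1], by linarith [hz.1]⟩
    have := (h'.eq_zero_of_right h' (fun z hz => hb _ (hb' z hz))
      (fun z hz => hb _ (hb' z hz)) (by simpa using h0.symm) (by simpa using hp)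
      (by simpa using h0.symm) (by simpa using hp) (x + b - y) ⟨by linarith [hy.2], by linarith⟩).1
    simpa using this

/-- Positivity for `-φ'' + k φ = Γ` with positive source. -/
theorem pos_of_source {Γ : ℝ → ℝ} {k : ℝ} (hk : 0 < k)
    (h : TwiceDiffOn a b φ p (fun x => k * φ x - Γ x)) (ha : φ a = 0) (hb : φ b = 0)
    (hΓ : ∀ x ∈ Ioo a b, 0 < Γ x) : ∀ x ∈ Ioo a b, 0 < φ x := by
  have hn := h.nonneg_of_deriv₂ ha.ge hb.ge fun x hx hneg => by
    nlinarith [hΓ x hx, mul_neg_of_pos_of_neg hk hneg]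
  intro x hx
  refine lt_of_le_of_ne (hn x (Ioo_subset_Icc_self hx)) fun h0 => ?_
  have := h.deriv₂_nonneg_of_min hx fun z hz => h0 ▸ hn z hz
  rw [← h0, mul_zero] at this
  linarith [hΓ x hx]

/-- A solution of `φ'' = -φ A` with zero boundary values has no negative part close to the
boundary. -/
theorem nonneg_of_pos_inside (h : TwiceDiffOn a b φ p (fun x => -(φ x * A x))) {C ε : ℝ}
    (hA : ∀ x ∈ Ioo a b, |A x| ≤ C) (ha : φ a = 0) (hb : φ b = 0)
    (hε : 2 * ε ≤ b - a) (hεC : (C + 1) * ε ^ 2 ≤ 2)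
    (hpos : ∀ x ∈ Icc (a + ε) (b - ε), 0 < φ x) : ∀ x ∈ Icc a b, 0 ≤ φ x := by
  intro x hx
  by_contra! hneg
  obtain ⟨a', b', haa', hax, hxb, hbb', ha', hb', hpos'⟩ :=
    exists_component_pos h.neg.cont hx (by simp [ha]) (by simp [hb]) (by simpa using hneg)
  have hC : 0 ≤ C := (abs_nonneg _).trans (hA x ⟨by linarith, by linarith⟩)
  have hlen : b' - a' ≤ ε := by
    by_contra! hlt
    rcases le_total x (a + ε) with hxε | hxε
    · have : a + ε < b' := by linarith
      rcases hxε.eq_or_lt with h1 | h1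
      · have := hpos x ⟨h1.ge, by linarith⟩
        linarith
      · have h2 := hpos (a + ε) ⟨le_rfl, by linarith⟩
        have h3 := hpos' (a + ε) ⟨by linarith, this⟩
        linarith
    · rcases le_total x (b - ε) with h1 | h1
      · have := hpos x ⟨hxε, h1⟩
        linarith
      · have h2 := hpos (b - ε) ⟨by linarith, le_rfl⟩
        have h3 := hpos' (b - ε) ⟨by linarith, by
          rcases h1.eq_or_lt with h4 | h4 <;> linarith⟩
        linarith
  have hθ : TwiceDiffOn a' b' (fun y => 2 - (C + 1) * (y - a') ^ 2)
      (fun y => -(2 * (C + 1) * (y - a'))) (fun _ => -(2 * (C + 1))) := by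
    have hd : ∀ y : ℝ, HasDerivAt (fun y => y - a') 1 y := fun y => (hasDerivAt_id y).sub_const a'
    refine ⟨by fun_prop, by fun_prop, fun y _ => ?_, fun y _ => ?_⟩
    · exact ((((hd y).pow 2).const_mul (C + 1)).const_sub 2).congr_deriv (by simp; ring)
    · exact (((hd y).const_mul (2 * (C + 1))).neg).congr_deriv (by ring)
  have hsq : ∀ y ∈ Icc a' b', 0 ≤ 2 - (C + 1) * (y - a') ^ 2 := fun y hy => by
    have : (y - a') ^ 2 ≤ ε ^ 2 := pow_le_pow_left₀ (by linarith [hy.1]) (by linarith [hy.2]) 2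
    nlinarith
  refine (h.neg.mono haa' hbb').wronskian_false hθ (hax.trans hxb) ha' hb' hpos'
    (hsq a' ⟨le_rfl, by linarith⟩) (hsq b' ⟨by linarith, le_rfl⟩) fun y hy => ?_
  have h1 := hsq y (Ioo_subset_Icc_self hy)
  have h2 := hpos' y hy
  have h3 := abs_le.1 (hA y ⟨by linarith [hy.1], by linarith [hy.2]⟩)
  have h4 : 2 - (C + 1) * (y - a') ^ 2 ≤ 2 := by nlinarith [sq_nonneg (y - a')]
  have h5 : A y * (2 - (C + 1) * (y - a') ^ 2) < 2 * (C + 1) := by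
    nlinarith [mul_le_mul_of_nonneg_right h3.2 h1]
  nlinarith [mul_lt_mul_of_pos_left h5 h2]

end TwiceDiffOn

/-- Per capita growth rate along the homotopy from an explicitly solvable system (`s = 0`) to the
given one (`s = 1`). -/
noncomputable def homGrowth (L d : ℝ) (f : ℝ → ℝ → ℝ) (x s p q : ℝ) : ℝ :=
  ((1 - s) * (d * (π / L) ^ 2 + 2 * sin (π / L * x) - p - q) + s * f p q) / d

/-- Source term of the second equation along the homotopy. -/
noncomputable def homSource (L d τ : ℝ) (H : ℝ → ℝ) (s p : ℝ) : ℝ :=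
  ((1 - s) * ((d * (π / L) ^ 2 + 1) * p) + s * (H p / τ)) / d

/-- Decay rate of the second equation along the homotopy. -/
noncomputable def homDecay (d τ s : ℝ) : ℝ := ((1 - s) + s / τ) / d

/-- Solutions of the boundary value problem along the homotopy. -/
structure HomotopySol (L d τ : ℝ) (f : ℝ → ℝ → ℝ) (H : ℝ → ℝ) (s : ℝ) (u u' v v' : ℝ → ℝ) :
    Prop where
  diffu : TwiceDiffOn 0 L u u' (fun x => -(u x * homGrowth L d f x s (u x) (v x)))
  diffv : TwiceDiffOn 0 L v v' (fun x => homDecay d τ s * v x - homSource L d τ H s (u x))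
  u_left : u 0 = 0
  u_right : u L = 0
  v_left : v 0 = 0
  v_right : v L = 0

/-- The standing assumptions on the data in the range of existence. -/
structure Admissible (L d τ ustar : ℝ) (f : ℝ → ℝ → ℝ) (H : ℝ → ℝ) : Prop where
  hL : 0 < L
  hd : 0 < d
  hτ : 0 < τ
  hf : ContDiff ℝ 2 (Function.uncurry f)
  hfu : ∀ p ≥ (0:ℝ), ∀ q ≥ (0:ℝ), deriv (fun s => f s q) p < 0
  hfv : ∀ p ≥ (0:ℝ), ∀ q ≥ (0:ℝ), deriv (f p) q < 0
  hH : ContDiff ℝ 2 H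
  hH0 : H 0 = 0
  hH' : ∀ p ≥ (0:ℝ), 0 < deriv H p
  lt_zero : d * (π / L) ^ 2 < f 0 0
  neg : ∀ p > ustar, ∀ q ≥ (0:ℝ), f p q < 0

namespace Admissible

variable {L d τ ustar s : ℝ} {f : ℝ → ℝ → ℝ} {H : ℝ → ℝ} {u u' v v' : ℝ → ℝ}

theorem decay_pos (h : Admissible L d τ ustar f H) (hs : s ∈ Icc (0:ℝ) 1) :
    0 < homDecay d τ s := by
  refine div_pos ?_ h.hd
  rcases hs.1.eq_or_lt with rfl | h0
  · simp
  · have := div_pos h0 h.hτ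
    linarith [hs.2]

theorem eigenvalue_pos (h : Admissible L d τ ustar f H) : 0 < d * (π / L) ^ 2 :=
  mul_pos h.hd (pow_pos (div_pos pi_pos h.hL) 2)

theorem H_mono (h : Admissible L d τ ustar f H) {p q : ℝ} (hp : 0 ≤ p) (hpq : p ≤ q) :
    H p ≤ H q := by
  obtain ⟨ξ, hξ, he⟩ := exists_sub_eq_deriv_mul (h.hH.differentiable (by norm_num))
    (R := q) (x := q) (y := p) ⟨hp.trans hpq, le_rfl⟩ ⟨hp, hpq⟩
  have := mul_nonneg (h.hH' ξ hξ.1).le (sub_nonneg.2 hpq)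
  linarith

theorem H_pos (h : Admissible L d τ ustar f H) {p : ℝ} (hp : 0 < p) : 0 < H p := by
  obtain ⟨ξ, hξ, he⟩ := exists_sub_eq_deriv_mul (h.hH.differentiable (by norm_num))
    (R := p) (x := p) (y := 0) ⟨hp.le, le_rfl⟩ ⟨le_rfl, hp.le⟩
  have := mul_pos (h.hH' ξ hξ.1) hp
  rw [h.hH0] at he
  linarith

theorem source_pos (h : Admissible L d τ ustar f H) (hs : s ∈ Icc (0:ℝ) 1) {p : ℝ} (hp : 0 < p) :
    0 < homSource L d τ H s p := by
  have hlam := h.eigenvalue_pos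
  have h1 : 0 < (d * (π / L) ^ 2 + 1) * p := by positivity
  have h2 : 0 < H p / τ := div_pos (h.H_pos hp) h.hτ
  refine div_pos ?_ h.hd
  rcases hs.1.eq_or_lt with rfl | h0
  · simpa using h1
  · have := mul_pos h0 h2
    have := mul_nonneg (sub_nonneg.2 hs.2) h1.le
    linarith

theorem source_zero (h : Admissible L d τ ustar f H) : homSource L d τ H s 0 = 0 := by
  simp [homSource, h.hH0]

theorem continuous_growth (h : Admissible L d τ ustar f H) :
    Continuous fun z : ℝ × ℝ × ℝ × ℝ => homGrowth L d f z.1 z.2.1 z.2.2.1 z.2.2.2 := by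
  have := h.hf.continuous.comp (continuous_snd.comp (continuous_snd (X := ℝ) (Y := ℝ × ℝ × ℝ)))
  have h2 : Continuous fun z : ℝ × ℝ × ℝ × ℝ => f z.2.2.1 z.2.2.2 := this
  unfold homGrowth
  refine Continuous.div_const (Continuous.add ?_ (Continuous.mul ?_ h2)) d <;> fun_prop

theorem exists_growth_bound (h : Admissible L d τ ustar f H) (R : ℝ) :
    ∃ C, ∀ x ∈ Icc 0 L, ∀ s ∈ Icc (0:ℝ) 1, ∀ p q : ℝ, |p| ≤ R → |q| ≤ R →
      |homGrowth L d f x s p q| ≤ C := by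
  obtain ⟨C, hC⟩ := ((isCompact_Icc (a := (0:ℝ)) (b := L)).prod ((isCompact_Icc (a := (0:ℝ))
    (b := 1)).prod ((isCompact_Icc (a := -R) (b := R)).prod (isCompact_Icc (a := -R)
      (b := R))))).exists_bound_of_continuousOn h.continuous_growth.continuousOn
  exact ⟨C, fun x hx s hs p q hp hq => hC (x, s, p, q) ⟨hx, hs, abs_le.1 hp, abs_le.1 hq⟩⟩

/-- A priori bounds, uniform along the homotopy. -/
theorem exists_upper_bound (h : Admissible L d τ ustar f H) :
    ∃ R, 0 ≤ R ∧ ∀ s ∈ Icc (0:ℝ) 1, ∀ u u' v v', HomotopySol L d τ f H s u u' v v' →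
      (∀ x ∈ Icc 0 L, 0 ≤ u x ∧ 0 ≤ v x) → ∀ x ∈ Icc 0 L, u x ≤ R ∧ v x ≤ R := by
  have hlam := h.eigenvalue_pos
  set lam := d * (π / L) ^ 2 with hlam'
  set M := max (lam + 2) ustar with hM
  set N := max ((lam + 1) * M) (H M) with hN
  have hM0 : 0 < M := lt_max_of_lt_left (by linarith)
  have hN0 : 0 ≤ N := le_max_of_le_left (by positivity)
  refine ⟨max M N, le_max_of_le_left hM0.le, fun s hs u u' v v' hsol hnn => ?_⟩
  have hu : ∀ x ∈ Icc 0 L, u x ≤ M := by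
    refine hsol.diffu.le_of_deriv₂ (hsol.u_left.trans_le hM0.le) (hsol.u_right.trans_le hM0.le)
      fun x hx hux => ?_
    have hv := (hnn x (Ioo_subset_Icc_self hx)).2
    have h1 : lam + 2 * sin (π / L * x) - u x - v x < 0 := by
      have := sin_le_one (π / L * x)
      have := (le_max_left (lam + 2) ustar).trans_lt hux
      linarith
    have h2 := h.neg (u x) ((le_max_right (lam + 2) ustar).trans_lt hux) (v x) hv
    have h3 : homGrowth L d f x s (u x) (v x) < 0 := by
      refine div_neg_of_neg_of_pos ?_ h.hd
      rcases hs.1.eq_or_lt with rfl | h0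
      · simpa using h1
      · have := mul_neg_of_pos_of_neg h0 h2
        have := mul_nonpos_of_nonneg_of_nonpos (sub_nonneg.2 hs.2) h1.le
        linarith
    have := mul_neg_of_pos_of_neg (hM0.trans hux) h3
    linarith
  have hv : ∀ x ∈ Icc 0 L, v x ≤ N := by
    refine hsol.diffv.le_of_deriv₂ (hsol.v_left.trans_le hN0) (hsol.v_right.trans_le hN0)
      fun x hx hvx => ?_
    have hx' := Ioo_subset_Icc_self hx
    have h1 : homSource L d τ H s (u x) ≤ homDecay d τ s * N := by
      have h2 : (lam + 1) * u x ≤ N := le_max_of_le_left (by gcongr; exact hu x hx')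
      have h3 : H (u x) ≤ N := le_max_of_le_right (h.H_mono (hnn x hx').1 (hu x hx'))
      unfold homSource homDecay
      rw [div_mul_eq_mul_div]
      refine div_le_div_of_nonneg_right ?_ h.hd.le
      have h4 : H (u x) / τ ≤ N / τ := div_le_div_of_nonneg_right h3 h.hτ.le
      have h5 := mul_le_mul_of_nonneg_left h2 (sub_nonneg.2 hs.2)
      have h6 := mul_le_mul_of_nonneg_left h4 hs.1
      calc _ ≤ (1 - s) * N + s * (N / τ) := add_le_add h5 h6
        _ = _ := by ring
    have := mul_lt_mul_of_pos_left hvx (h.decay_pos hs)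
    linarith
  exact fun x hx => ⟨(hu x hx).trans (le_max_left _ _), (hv x hx).trans (le_max_right _ _)⟩

/-- Positive solutions stay away from zero, as long as `s` does. -/
theorem exists_lower_bound (h : Admissible L d τ ustar f H) {s₀ : ℝ} (hs₀ : 0 < s₀) :
    ∃ δ > 0, ∀ s ∈ Icc s₀ 1, ∀ u u' v v', HomotopySol L d τ f H s u u' v v' →
      (∀ x ∈ Ioo 0 L, 0 < u x ∧ 0 < v x) → ∃ x ∈ Ioo 0 L, δ ≤ u x ∨ δ ≤ v x := by
  have hgap := sub_pos.2 h.lt_zero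
  obtain ⟨η, hη, hball⟩ := Metric.eventually_nhds_iff.1
    ((h.hf.continuous.tendsto (0, 0)).eventually_const_lt
      (show (f 0 0 + d * (π / L) ^ 2) / 2 < Function.uncurry f (0, 0) by
        change _ < f 0 0
        linarith))
  refine ⟨min η (s₀ * (f 0 0 - d * (π / L) ^ 2) / 8), lt_min hη (by positivity),
    fun s hs u u' v v' hsol hpos => ?_⟩
  by_contra! hsmall
  refine (twiceDiffOn_sin L).wronskian_false hsol.diffu h.hL (by simp) (sin_scaled_right h.hL)
    (fun x hx => sin_scaled_pos h.hL hx) hsol.u_left.ge hsol.u_right.ge fun x hx => ?_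
  have hsin := sin_scaled_pos h.hL hx
  obtain ⟨hu, hv⟩ := hpos x hx
  obtain ⟨hu1, hv1⟩ := hsmall x hx
  have hfx : (f 0 0 + d * (π / L) ^ 2) / 2 < f (u x) (v x) := by
    refine @hball (u x, v x) ?_
    rw [Prod.dist_eq, max_lt_iff]
    simp only [dist_zero_right, Real.norm_eq_abs, abs_of_pos hu, abs_of_pos hv]
    exact ⟨hu1.trans_le (min_le_left _ _), hv1.trans_le (min_le_left _ _)⟩
  have hu2 := hu1.trans_le (min_le_right _ _)
  have hv2 := hv1.trans_le (min_le_right _ _)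
  have hg : (π / L) ^ 2 < homGrowth L d f x s (u x) (v x) := by
    unfold homGrowth
    rw [lt_div_iff₀ h.hd]
    have hs0 : 0 < s := hs₀.trans_le hs.1
    have h1 := mul_lt_mul_of_pos_left hfx hs0
    have h2 : (1 - s) * (d * (π / L) ^ 2 - s₀ * (f 0 0 - d * (π / L) ^ 2) / 4) ≤
        (1 - s) * (d * (π / L) ^ 2 + 2 * sin (π / L * x) - u x - v x) :=
      mul_le_mul_of_nonneg_left (by linarith) (sub_nonneg.2 hs.2)
    nlinarith [mul_le_mul_of_nonneg_right hs.1 hgap.le, mul_pos hs0 (mul_pos hs₀ hgap)]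
  nlinarith [mul_lt_mul_of_pos_left hg (mul_pos hsin hu)]

/-- Nonnegative nontrivial solutions are positive. -/
theorem pos_of_nonneg (h : Admissible L d τ ustar f H) (hs : s ∈ Icc (0:ℝ) 1)
    (hsol : HomotopySol L d τ f H s u u' v v') (hnn : ∀ x ∈ Icc 0 L, 0 ≤ u x)
    (hne : ∃ x ∈ Icc 0 L, u x ≠ 0 ∨ v x ≠ 0) : ∀ x ∈ Ioo 0 L, 0 < u x ∧ 0 < v x := by
  have hne' : ∃ x ∈ Icc 0 L, u x ≠ 0 := by
    by_contra! hu
    have hk := h.decay_pos hs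
    have hle := hsol.diffv.le_of_deriv₂ hsol.v_left.le hsol.v_right.le fun x hx hpos => by
      rw [hu x (Ioo_subset_Icc_self hx), h.source_zero]
      linarith [mul_pos hk hpos]
    have hge := hsol.diffv.nonneg_of_deriv₂ hsol.v_left.ge hsol.v_right.ge fun x hx hneg => by
      rw [hu x (Ioo_subset_Icc_self hx), h.source_zero]
      linarith [mul_neg_of_pos_of_neg hk hneg]
    obtain ⟨x, hx, hx' | hx'⟩ := hne
    · exact hx' (hu x hx)
    · exact hx' (le_antisymm (hle x hx) (hge x hx))
  obtain ⟨y, hy, hyne⟩ := hne'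
  have hc : ContinuousOn (fun x => homGrowth L d f x s (u x) (v x)) (Icc 0 L) :=
    h.continuous_growth.comp_continuousOn (continuousOn_id.prodMk (continuousOn_const.prodMk
      (hsol.diffu.cont.prodMk hsol.diffv.cont)))
  obtain ⟨C, hC⟩ := isCompact_Icc.exists_bound_of_continuousOn hc
  have hu := hsol.diffu.pos_of_nonneg (fun x hx => hC x (Ioo_subset_Icc_self hx)) hnn hy hyne
  have hv := hsol.diffv.pos_of_source (h.decay_pos hs) hsol.v_left hsol.v_right
    fun x hx => h.source_pos hs (hu x hx)
  exact fun x hx => ⟨hu x hx, hv x hx⟩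

/-- Positivity is stable under uniformly small perturbations of solutions. -/
theorem exists_pos_of_near (h : Admissible L d τ ustar f H)
    (hu : ContinuousOn u (Icc 0 L)) (hv : ContinuousOn v (Icc 0 L))
    (hpos : ∀ x ∈ Ioo 0 L, 0 < u x) :
    ∃ ε > 0, ∀ s ∈ Icc (0:ℝ) 1, ∀ w w' z z', HomotopySol L d τ f H s w w' z z' →
      (∀ x ∈ Icc 0 L, |w x - u x| < ε ∧ |z x - v x| < ε) → ∀ x ∈ Ioo 0 L, 0 < w x ∧ 0 < z x := by
  obtain ⟨R, hR⟩ := (isCompact_Icc (a := (0:ℝ)) (b := L)).exists_bound_of_continuousOn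
    (hu.prodMk hv)
  obtain ⟨C, hC⟩ := h.exists_growth_bound (R + 1)
  set ρ := min (L / 2) (min 1 (1 / (|C| + 1))) with hρ
  have hL := h.hL
  have hρ0 : 0 < ρ := lt_min (by positivity) (lt_min one_pos (by positivity))
  have hρL : ρ ≤ L / 2 := min_le_left _ _
  have hρ1 : ρ ≤ 1 := (min_le_right _ _).trans (min_le_left _ _)
  have hρC : (|C| + 1) * ρ ≤ 1 := by
    have : ρ ≤ 1 / (|C| + 1) := (min_le_right _ _).trans (min_le_right _ _)
    rwa [le_div_iff₀ (by positivity), mul_comm] at this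
  have hmem : L / 2 ∈ Icc (0 + ρ) (L - ρ) := ⟨by linarith, by linarith⟩
  have hsub : Icc (0 + ρ) (L - ρ) ⊆ Ioo 0 L := fun x hx =>
    ⟨by linarith [hx.1], by linarith [hx.2]⟩
  obtain ⟨x₀, hx₀, hmin⟩ := isCompact_Icc.exists_isMinOn ⟨_, hmem⟩
    (hu.mono (hsub.trans Ioo_subset_Icc_self))
  refine ⟨min 1 (u x₀), lt_min one_pos (hpos x₀ (hsub hx₀)), fun s hs w w' z z' hsol hnear => ?_⟩
  have hinside : ∀ x ∈ Icc (0 + ρ) (L - ρ), 0 < w x := fun x hx => by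
    have h1 := (hnear x (Ioo_subset_Icc_self (hsub hx))).1.trans_le (min_le_right _ _)
    have h2 : u x₀ ≤ u x := hmin hx
    linarith [(abs_lt.1 h1).1]
  have hbound : ∀ x ∈ Ioo 0 L, |homGrowth L d f x s (w x) (z x)| ≤ |C| := fun x hx => by
    have hx' := Ioo_subset_Icc_self hx
    have h1 := (hnear x hx').1.trans_le (min_le_left _ _)
    have h2 := (hnear x hx').2.trans_le (min_le_left _ _)
    have h3 := hR x hx'
    simp only [Prod.norm_def, sup_le_iff, Real.norm_eq_abs] at h3
    refine (hC x hx' s hs _ _ ?_ ?_).trans (le_abs_self C)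
    · have := abs_sub_abs_le_abs_sub (w x) (u x)
      linarith [h3.1]
    · have := abs_sub_abs_le_abs_sub (z x) (v x)
      linarith [h3.2]
  have hnn := hsol.diffu.nonneg_of_pos_inside hbound hsol.u_left hsol.u_right
    (by linarith) (by nlinarith) hinside
  exact h.pos_of_nonneg hs hsol hnn
    ⟨_, Ioo_subset_Icc_self (hsub hmem), Or.inl (hinside _ hmem).ne'⟩

end Admissible

open scoped Topology

/-- Componentwise description of the solution operator of the Dirichlet problem. -/
theorem greenCLM_components {L : ℝ} (hL : 0 < L) {w g : C(Icc 0 L, ℝ × ℝ)}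
    (hw : w = greenCLM (ℝ × ℝ) hL.le g) :
    ∃ u u' v v' : ℝ → ℝ, ContDiff ℝ 2 u ∧ ContDiff ℝ 2 v ∧
      TwiceDiffOn 0 L u u' (fun x => -(IccExtend hL.le g x).1) ∧
      TwiceDiffOn 0 L v v' (fun x => -(IccExtend hL.le g x).2) ∧
      u 0 = 0 ∧ u L = 0 ∧ v 0 = 0 ∧ v L = 0 ∧ ∀ x : Icc 0 L, w x = (u x, v x) := by
  obtain ⟨U, U', hU, hU', h0, h1, he⟩ := greenCLM_spec hL g
  have hc := continuous_iccExtend hL.le g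
  have hsmooth : ContDiff ℝ 2 U := by
    have h2 : deriv U = U' := funext fun x => (hU x).deriv
    have h3 : deriv U' = fun x => -IccExtend hL.le g x := funext fun x => (hU' x).deriv
    rw [show (2 : WithTop ℕ∞) = 1 + 1 by norm_num, contDiff_succ_iff_deriv]
    refine ⟨fun x => (hU x).differentiableAt, by simp, ?_⟩
    rw [h2, contDiff_one_iff_deriv]
    exact ⟨fun x => (hU' x).differentiableAt, by rw [h3]; exact hc.neg⟩
  have hcU : Continuous U := hsmooth.continuous
  have hcU' : Continuous U' := continuous_iff_continuousAt.2 fun x => (hU' x).continuousAt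
  refine ⟨fun x => (U x).1, fun x => (U' x).1, fun x => (U x).2, fun x => (U' x).2,
    contDiff_fst.comp hsmooth, contDiff_snd.comp hsmooth,
    ⟨by fun_prop, by fun_prop, fun x _ => (hU x).fst, fun x _ => (hU' x).fst⟩,
    ⟨by fun_prop, by fun_prop, fun x _ => (hU x).snd, fun x _ => (hU' x).snd⟩,
    by simp [h0], by simp [h1], by simp [h0], by simp [h1], fun x => ?_⟩
  rw [hw, he x]

/-- The nonlinearity along the homotopy, as a map of `(x, s, p, q)`. -/
noncomputable def homNonlin (L d τ : ℝ) (f : ℝ → ℝ → ℝ) (H : ℝ → ℝ) (z : ℝ × ℝ × ℝ × ℝ) : ℝ × ℝ :=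
  (z.2.2.1 * homGrowth L d f z.1 z.2.1 z.2.2.1 z.2.2.2,
    homSource L d τ H z.2.1 z.2.2.1 - homDecay d τ z.2.1 * z.2.2.2)

/-- The inclusion of `[0, L]` into the line. -/
def iccCoe (L : ℝ) : C(Icc 0 L, ℝ) := ⟨Subtype.val, continuous_subtype_val⟩

namespace Admissible

variable {L d τ ustar s : ℝ} {f : ℝ → ℝ → ℝ} {H : ℝ → ℝ}

theorem contDiff_nonlin (h : Admissible L d τ ustar f H) :
    ContDiff ℝ 1 (homNonlin L d τ f H) := by
  have hf1 : ContDiff ℝ 1 fun z : ℝ × ℝ × ℝ × ℝ => f z.2.2.1 z.2.2.2 :=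
    (h.hf.of_le (by norm_num)).comp (contDiff_snd.comp contDiff_snd)
  have hH1 : ContDiff ℝ 1 fun z : ℝ × ℝ × ℝ × ℝ => H z.2.2.1 :=
    (h.hH.of_le (by norm_num)).comp (contDiff_fst.comp (contDiff_snd.comp contDiff_snd))
  unfold homNonlin homGrowth homSource homDecay
  simp only [div_eq_mul_inv]
  refine ContDiff.prodMk (ContDiff.mul (by fun_prop) (ContDiff.mul (ContDiff.add (by fun_prop)
    (ContDiff.mul (by fun_prop) hf1)) contDiff_const)) (ContDiff.sub (ContDiff.mul
      (ContDiff.add (by fun_prop) (ContDiff.mul (by fun_prop) (ContDiff.mul hH1 contDiff_const)))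
      contDiff_const) (by fun_prop))

/-- The nonlinearity along the homotopy as a bundled continuous map. -/
noncomputable def nonlin (h : Admissible L d τ ustar f H) : C(ℝ × ℝ × ℝ × ℝ, ℝ × ℝ) :=
  ⟨homNonlin L d τ f H, h.contDiff_nonlin.continuous⟩

/-- Solutions along the homotopy as fixed points. -/
def IsFixed (h : Admissible L d τ ustar f H) (s : ℝ) (w : C(Icc 0 L, ℝ × ℝ)) : Prop :=
  w = greenCLM (ℝ × ℝ) h.hL.le (paramSuperposition (iccCoe L) h.nonlin w s)

theorem IsFixed.exists_sol {h : Admissible L d τ ustar f H} {w : C(Icc 0 L, ℝ × ℝ)}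
    (hw : h.IsFixed s w) :
    ∃ u u' v v' : ℝ → ℝ, ContDiff ℝ 2 u ∧ ContDiff ℝ 2 v ∧ HomotopySol L d τ f H s u u' v v' ∧
      ∀ x : Icc 0 L, w x = (u x, v x) := by
  obtain ⟨u, u', v, v', cu, cv, hu, hv, u0, uL, v0, vL, he⟩ := greenCLM_components h.hL hw
  have key : ∀ x ∈ Ioo 0 L, IccExtend h.hL.le (paramSuperposition (iccCoe L) h.nonlin w s) x =
      (u x * homGrowth L d f x s (u x) (v x),
        homSource L d τ H s (u x) - homDecay d τ s * v x) := fun x hx => by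
    rw [IccExtend_of_mem h.hL.le _ (Ioo_subset_Icc_self hx)]
    have := he ⟨x, Ioo_subset_Icc_self hx⟩
    simp [paramSuperposition, nonlin, homNonlin, this, iccCoe]
  refine ⟨u, u', v, v', cu, cv, ⟨hu.congr_deriv₂ fun x hx => ?_, hv.congr_deriv₂ fun x hx => ?_,
    u0, uL, v0, vL⟩, he⟩
  · rw [key x hx]
  · rw [key x hx]
    ring

theorem fderiv_nonlin (h : Admissible L d τ ustar f H) (x s p q a b : ℝ) :
    fderiv ℝ h.nonlin (x, s, p, q) (0, 0, a, b) =
      (a * homGrowth L d f x s p q + p * (((1 - s) * (-a - b) +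
        s * (deriv (fun r => f r q) p * a + deriv (f p) q * b)) / d),
      ((1 - s) * ((d * (π / L) ^ 2 + 1) * a) + s * (deriv H p * a / τ)) / d
        - homDecay d τ s * b) := by
  have hline : HasDerivAt (fun t : ℝ => ((x, s, p + t * a, q + t * b) : ℝ × ℝ × ℝ × ℝ))
      (0, 0, a, b) 0 := by
    refine (hasDerivAt_const _ _).prodMk ((hasDerivAt_const _ _).prodMk (HasDerivAt.prodMk ?_ ?_))
    · simpa using ((hasDerivAt_id (0:ℝ)).mul_const a).const_add p
    · simpa using ((hasDerivAt_id (0:ℝ)).mul_const b).const_add q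
  have hp : HasDerivAt (fun t : ℝ => p + t * a) a 0 := by
    simpa using ((hasDerivAt_id (0:ℝ)).mul_const a).const_add p
  have hq : HasDerivAt (fun t : ℝ => q + t * b) b 0 := by
    simpa using ((hasDerivAt_id (0:ℝ)).mul_const b).const_add q
  have hfd : HasDerivAt (fun t : ℝ => f (p + t * a) (q + t * b))
      (deriv (fun r => f r q) p * a + deriv (f p) q * b) 0 := by
    rw [← fderiv_uncurry_apply h.hf]
    refine HasFDerivAt.comp_hasDerivAt_of_eq (l := Function.uncurry f) (0:ℝ)
      (h.hf.differentiable (by norm_num) (p, q)).hasFDerivAt (hp.prodMk hq) (by simp)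
  have hHd : HasDerivAt (fun t : ℝ => H (p + t * a)) (deriv H p * a) 0 :=
    HasDerivAt.comp_of_eq (0:ℝ) (h.hH.differentiable (by norm_num) p).hasDerivAt hp (by simp)
  have h1 : HasDerivAt (fun t : ℝ => h.nonlin (x, s, p + t * a, q + t * b))
      (fderiv ℝ h.nonlin (x, s, p, q) (0, 0, a, b)) 0 :=
    HasFDerivAt.comp_hasDerivAt_of_eq (0:ℝ)
      (h.contDiff_nonlin.differentiable (by norm_num) (x, s, p, q)).hasFDerivAt hline (by simp)
  refine h1.unique (HasDerivAt.prodMk ?_ ?_)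
  · have hg : HasDerivAt (fun t : ℝ => homGrowth L d f x s (p + t * a) (q + t * b))
        (((1 - s) * (-a - b) + s * (deriv (fun r => f r q) p * a + deriv (f p) q * b)) / d) 0 := by
      have := ((((hp.const_sub (d * (π / L) ^ 2 + 2 * sin (π / L * x))).sub hq).const_mul
        (1 - s)).add (hfd.const_mul s)).div_const d
      exact this
    refine (hp.mul hg).congr_deriv ?_
    simp
  · exact ((((hp.const_mul (d * (π / L) ^ 2 + 1)).const_mul (1 - s)).add
      ((hHd.div_const τ).const_mul s)).div_const d).sub (hq.const_mul (homDecay d τ s))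

/-- Positivity in the interior. -/
def IsPositive (w : C(Icc 0 L, ℝ × ℝ)) : Prop :=
  ∀ x : Icc 0 L, (x : ℝ) ∈ Ioo 0 L → 0 < (w x).1 ∧ 0 < (w x).2

/-- Positive solutions along the homotopy are nondegenerate. -/
theorem linearization_injective (h : Admissible L d τ ustar f H) (hs : s ∈ Icc (0:ℝ) 1)
    {w : C(Icc 0 L, ℝ × ℝ)} (hw : h.IsFixed s w) (hpos : IsPositive w)
    {k g : C(Icc 0 L, ℝ × ℝ)}
    (hg : ∀ x, g x = fderiv ℝ h.nonlin (iccCoe L x, s, w x) (0, 0, k x))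
    (hk : k = greenCLM (ℝ × ℝ) h.hL.le g) : k = 0 := by
  obtain ⟨u, u', v, v', -, -, hsol, he⟩ := hw.exists_sol
  obtain ⟨φ, φ', ψ, ψ', -, -, hφ, hψ, φ0, φL, ψ0, ψL, hke⟩ := greenCLM_components h.hL hk
  have upos : ∀ x ∈ Ioo 0 L, 0 < u x := fun x hx => by
    simpa [he] using (hpos ⟨x, Ioo_subset_Icc_self hx⟩ hx).1
  have vpos : ∀ x ∈ Ioo 0 L, 0 < v x := fun x hx => by
    simpa [he] using (hpos ⟨x, Ioo_subset_Icc_self hx⟩ hx).2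
  have key : ∀ x ∈ Ioo 0 L, IccExtend h.hL.le g x =
      (φ x * homGrowth L d f x s (u x) (v x) + u x * (((1 - s) * (-φ x - ψ x) +
        s * (deriv (fun r => f r (v x)) (u x) * φ x + deriv (f (u x)) (v x) * ψ x)) / d),
      ((1 - s) * ((d * (π / L) ^ 2 + 1) * φ x) + s * (deriv H (u x) * φ x / τ)) / d
        - homDecay d τ s * ψ x) := fun x hx => by
    rw [IccExtend_of_mem h.hL.le _ (Ioo_subset_Icc_self hx), hg, he, hke]
    exact h.fderiv_nonlin _ _ _ _ _ _
  have hcu := hsol.diffu.cont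
  have huv : ContinuousOn (fun x => (u x, v x)) (Icc 0 L) := hcu.prodMk hsol.diffv.cont
  have c1 : ContinuousOn (fun x => homGrowth L d f x s (u x) (v x)) (Icc 0 L) :=
    h.continuous_growth.comp_continuousOn (continuousOn_id.prodMk (continuousOn_const.prodMk huv))
  have c2 : ContinuousOn (fun x => deriv (fun r => f r (v x)) (u x)) (Icc 0 L) :=
    (continuous_deriv_fst h.hf).comp_continuousOn huv
  have c3 : ContinuousOn (fun x => deriv (f (u x)) (v x)) (Icc 0 L) :=
    (continuous_deriv_snd h.hf).comp_continuousOn huv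
  have c4 : ContinuousOn (fun x => deriv H (u x)) (Icc 0 L) :=
    (h.hH.continuous_deriv (by norm_num)).comp_continuousOn hcu
  set B : ℝ → ℝ := fun x => u x * ((1 - s) - s * deriv (fun r => f r (v x)) (u x)) / d with hB
  set κ : ℝ → ℝ := fun x => u x * ((1 - s) - s * deriv (f (u x)) (v x)) / d with hκ
  set γ : ℝ → ℝ := fun x =>
    ((1 - s) * (d * (π / L) ^ 2 + 1) + s * (deriv H (u x) / τ)) / d with hγ
  obtain ⟨M, hM⟩ := (isCompact_Icc (a := (0:ℝ)) (b := L)).exists_bound_of_continuousOn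
    (f := fun x => (B x - homGrowth L d f x s (u x) (v x), κ x, homDecay d τ s, γ x))
    (by
      refine ContinuousOn.prodMk (ContinuousOn.sub ?_ c1) (ContinuousOn.prodMk ?_
        (continuousOn_const.prodMk ?_)) <;> fun_prop)
  have hMb : ∀ x ∈ Ioo 0 L, |B x - homGrowth L d f x s (u x) (v x)| ≤ M ∧ |κ x| ≤ M ∧
      |homDecay d τ s| ≤ M ∧ |γ x| ≤ M := fun x hx => by
    simpa only [Prod.norm_def, sup_le_iff, Real.norm_eq_abs] using hM x (Ioo_subset_Icc_self hx)
  have hcomb : ∀ c : ℝ, c < 0 → 0 < (1 - s) - s * c := fun c hc => by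
    rcases hs.1.eq_or_lt with rfl | h0
    · simp
    · have := mul_neg_of_pos_of_neg h0 hc
      linarith [hs.2]
  have hlam := h.eigenvalue_pos
  have hd := h.hd
  have hsys : SignedSystem L M (fun x => homGrowth L d f x s (u x) (v x)) B κ
      (fun _ => homDecay d τ s) γ u u' φ φ' ψ ψ' := by
    constructor
    · exact hsol.diffu.congr_deriv₂ fun x _ => by ring
    · exact upos
    · refine hφ.congr_deriv₂ fun x hx => ?_
      rw [key x hx]
      simp only [hB, hκ]
      ring
    · refine hψ.congr_deriv₂ fun x hx => ?_
      rw [key x hx]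
      simp only [hγ]
      ring
    · exact fun x hx => div_pos (mul_pos (upos x hx)
        (hcomb _ (h.hfu _ (upos x hx).le _ (vpos x hx).le))) hd
    · exact fun x hx => div_pos (mul_pos (upos x hx)
        (hcomb _ (h.hfv _ (upos x hx).le _ (vpos x hx).le))) hd
    · exact fun x _ => h.decay_pos hs
    · intro x hx
      refine div_pos ?_ hd
      have h1 := div_pos (h.hH' _ (upos x hx).le) h.hτ
      rcases hs.1.eq_or_lt with rfl | h0
      · simp only [sub_zero, one_mul, zero_mul, add_zero]
        linarith
      · have := mul_pos h0 h1
        have := mul_nonneg (sub_nonneg.2 hs.2) (show 0 ≤ d * (π / L) ^ 2 + 1 by linarith)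
        linarith
    · exact fun x hx => (hMb x hx).1
    · exact fun x hx => (le_abs_self _).trans (hMb x hx).2.1
    · exact fun x hx => (le_abs_self _).trans (hMb x hx).2.2.1
    · exact fun x hx => (le_abs_self _).trans (hMb x hx).2.2.2
  have hz := hsys.eq_zero φ0 φL ψ0 ψL
  refine ContinuousMap.ext fun x => ?_
  rw [hke x, (hz x x.2).1, (hz x x.2).2]
  rfl

end Admissible

/-- Uniqueness for the Dirichlet problem `φ'' = q`. -/
theorem TwiceDiffOn.le_of_deriv₂_eq {a b : ℝ} {φ p q θ r : ℝ → ℝ} (h : TwiceDiffOn a b φ p q)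
    (hθ : TwiceDiffOn a b θ r q) (ha : φ a = θ a) (hb : φ b = θ b) :
    ∀ x ∈ Icc a b, φ x ≤ θ x := by
  intro x hx
  by_contra! hlt
  have hD := h.sub hθ
  obtain ⟨a', b', haa', hax, hxb, hbb', ha', hb', hpos⟩ :=
    exists_component_pos hD.cont hx (by simp [ha]) (by simp [hb]) (by simpa using hlt)
  have hθ : TwiceDiffOn a' b' (fun y => (y - a') * (b' - y)) (fun y => 1 * (b' - y) + (y - a') * -1)
      (fun _ => -2) := by
    have h1 : ∀ y : ℝ, HasDerivAt (fun y => y - a') 1 y := fun y => (hasDerivAt_id y).sub_const a'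
    have h2 : ∀ y : ℝ, HasDerivAt (fun y => b' - y) (-1) y := fun y =>
      (hasDerivAt_id y).const_sub b'
    refine ⟨by fun_prop, by fun_prop, fun y _ => (h1 y).mul (h2 y), fun y _ => ?_⟩
    exact (((h2 y).const_mul 1).add ((h1 y).mul_const (-1))).congr_deriv (by norm_num)
  refine (hD.mono haa' hbb').wronskian_false hθ (hax.trans hxb) ha' hb' hpos (by simp) (by simp)
    fun y hy => ?_
  have := hpos y hy
  simp only [sub_self, zero_mul]
  linarith

namespace Admissible

variable {L d τ ustar s : ℝ} {f : ℝ → ℝ → ℝ} {H : ℝ → ℝ}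

theorem exists_fixed_zero (h : Admissible L d τ ustar f H) :
    ∃ w, h.IsFixed 0 w ∧ IsPositive w := by
  set w : C(Icc 0 L, ℝ × ℝ) :=
    ⟨fun x => (sin (π / L * x), sin (π / L * x)), by fun_prop⟩ with hw
  refine ⟨w, ?_, fun x hx => ⟨sin_scaled_pos h.hL hx, sin_scaled_pos h.hL hx⟩⟩
  set g := paramSuperposition (iccCoe L) h.nonlin w 0 with hg
  obtain ⟨u, u', v, v', -, -, hu, hv, u0, uL, v0, vL, he⟩ :=
    greenCLM_components h.hL (rfl : greenCLM (ℝ × ℝ) h.hL.le g = _)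
  have hd := h.hd.ne'
  have key : ∀ x ∈ Ioo 0 L, IccExtend h.hL.le g x =
      ((π / L) ^ 2 * sin (π / L * x), (π / L) ^ 2 * sin (π / L * x)) := fun x hx => by
    rw [IccExtend_of_mem h.hL.le _ (Ioo_subset_Icc_self hx)]
    change homNonlin L d τ f H (x, 0, sin (π / L * x), sin (π / L * x)) = _
    simp only [homNonlin, homGrowth, homSource, homDecay]
    ext
    · simp only
      field_simp
      ring
    · simp only
      field_simp
      ring
  have hu' := hu.congr_deriv₂ (t := fun x => -((π / L) ^ 2 * sin (π / L * x))) fun x hx => by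
    rw [key x hx]
  have hv' := hv.congr_deriv₂ (t := fun x => -((π / L) ^ 2 * sin (π / L * x))) fun x hx => by
    rw [key x hx]
  have hS := twiceDiffOn_sin L
  have hSL := sin_scaled_right h.hL
  refine ContinuousMap.ext fun x => ?_
  rw [← hg, he x]
  change (sin (π / L * x), sin (π / L * x)) = (u x, v x)
  ext
  · exact le_antisymm (hS.le_of_deriv₂_eq hu' (by simp [u0]) (by rw [hSL, uL]) x x.2)
      (hu'.le_of_deriv₂_eq hS (by simp [u0]) (by rw [hSL, uL]) x x.2)
  · exact le_antisymm (hS.le_of_deriv₂_eq hv' (by simp [v0]) (by rw [hSL, vL]) x x.2)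
      (hv'.le_of_deriv₂_eq hS (by simp [v0]) (by rw [hSL, vL]) x x.2)

/-- Positive solutions can be continued locally in the homotopy parameter. -/
theorem eventually_exists_fixed (h : Admissible L d τ ustar f H) (hs : s ∈ Icc (0:ℝ) 1)
    (hex : ∃ w, h.IsFixed s w ∧ IsPositive w) :
    ∀ᶠ t in 𝓝 s, t ∈ Icc (0:ℝ) 1 → ∃ w, h.IsFixed t w ∧ IsPositive w := by
  obtain ⟨w, hw, hpos⟩ := hex
  obtain ⟨u, u', v, v', -, -, hsol, he⟩ := hw.exists_sol
  obtain ⟨ε, hε, hnear⟩ := h.exists_pos_of_near hsol.diffu.cont hsol.diffv.cont fun x hx => by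
    simpa [he] using (hpos ⟨x, Ioo_subset_Icc_self hx⟩ hx).1
  filter_upwards [eventually_exists_fixedPoint _ (isCompactOperator_greenCLM h.hL.le) (iccCoe L)
    (n := h.nonlin) h.contDiff_nonlin hw
    (fun k g hg hk => h.linearization_injective hs hw hpos hg hk)
    (Metric.ball_mem_nhds w hε)] with t ht ht1
  obtain ⟨y, hy, hfix⟩ := ht
  obtain ⟨y₁, y₁', y₂, y₂', -, -, hsol', he'⟩ := IsFixed.exists_sol (h := h) hfix
  have hpos' := hnear t ht1 y₁ y₁' y₂ y₂' hsol' fun x hx => by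
    have h1 := (ContinuousMap.dist_apply_le_dist (f := y) (g := w) ⟨x, hx⟩).trans_lt hy
    rw [he, he', Prod.dist_eq, max_lt_iff] at h1
    exact h1
  exact ⟨y, hfix, fun x hx => by rw [he']; exact hpos' x hx⟩

theorem isClosed_fixed_params (h : Admissible L d τ ustar f H) {s₀ : ℝ} (hs₀ : 0 < s₀) :
    IsClosed ({s | ∃ w, h.IsFixed s w ∧ IsPositive w} ∩ Icc s₀ 1) := by
  obtain ⟨R, hR0, hR⟩ := h.exists_upper_bound
  obtain ⟨δ, hδ, hlow⟩ := h.exists_lower_bound hs₀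
  set Q : Set C(Icc 0 L, ℝ × ℝ) :=
    {w | ∀ x, w x ∈ Icc (0:ℝ) R ×ˢ Icc (0:ℝ) R} ∩ {w | δ ≤ ‖w‖} with hQ
  have hQc : IsClosed Q := by
    refine IsClosed.inter ?_ (isClosed_le continuous_const continuous_norm)
    simp only [ofPred_forall]
    exact isClosed_iInter fun x =>
      (isClosed_Icc.prod isClosed_Icc).preimage (continuous_eval_const x)
  have hQb : ∀ w ∈ Q, ‖w‖ ≤ R := fun w hw => (ContinuousMap.norm_le _ hR0).2 fun x => by
    obtain ⟨⟨h1, h2⟩, h3, h4⟩ := hw.1 x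
    rw [Prod.norm_def, Real.norm_eq_abs, Real.norm_eq_abs, abs_of_nonneg h1, abs_of_nonneg h3]
    exact max_le h2 h4
  convert isClosed_fixedPoint_params _ (isCompactOperator_greenCLM h.hL.le) (iccCoe L) h.nonlin
    hQc hQb s₀ 1 using 1
  ext s
  refine and_congr_left fun hs => ⟨?_, ?_⟩
  · rintro ⟨w, hw, hpos⟩
    refine ⟨w, ?_, hw⟩
    obtain ⟨u, u', v, v', -, -, hsol, he⟩ := hw.exists_sol
    have hp : ∀ x ∈ Ioo 0 L, 0 < u x ∧ 0 < v x := fun x hx => by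
      simpa [he] using hpos ⟨x, Ioo_subset_Icc_self hx⟩ hx
    have hnu := nonneg_on_Icc hsol.u_left hsol.u_right fun x hx => (hp x hx).1
    have hnv := nonneg_on_Icc hsol.v_left hsol.v_right fun x hx => (hp x hx).2
    have hup := hR s ⟨hs₀.le.trans hs.1, hs.2⟩ u u' v v' hsol fun x hx => ⟨hnu x hx, hnv x hx⟩
    obtain ⟨x, hx, hle⟩ := hlow s hs u u' v v' hsol hp
    refine ⟨fun x => ?_, ?_⟩
    · rw [he]
      exact ⟨⟨hnu x x.2, (hup x x.2).1⟩, hnv x x.2, (hup x x.2).2⟩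
    · refine le_trans ?_ (w.norm_coe_le_norm ⟨x, Ioo_subset_Icc_self hx⟩)
      rw [he, Prod.norm_def, le_max_iff]
      exact hle.imp (fun h1 => h1.trans (le_abs_self _)) fun h1 => h1.trans (le_abs_self _)
  · rintro ⟨w, ⟨hw, hne⟩, hfix⟩
    obtain ⟨u, u', v, v', -, -, hsol, he⟩ := IsFixed.exists_sol (h := h) hfix
    refine ⟨w, hfix, fun x hx => ?_⟩
    rw [he]
    refine h.pos_of_nonneg ⟨hs₀.le.trans hs.1, hs.2⟩ hsol (fun y hy => ?_) ?_ x hx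
    · simpa [he] using (hw ⟨y, hy⟩).1.1
    · by_contra! hzero
      have : w = 0 := ContinuousMap.ext fun y => by
        rw [he, (hzero y y.2).1, (hzero y y.2).2]
        rfl
      rw [mem_ofPred_eq, this, norm_zero] at hne
      linarith

theorem exists_fixed_one (h : Admissible L d τ ustar f H) :
    ∃ w, h.IsFixed 1 w ∧ IsPositive w := by
  set S : Set ℝ := {s | ∃ w, h.IsFixed s w ∧ IsPositive w}
  have hright : ∀ s ∈ S, s ∈ Ico (0:ℝ) 1 → ∀ y ∈ Ioi s, (S ∩ Ioc s y).Nonempty := by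
    intro s hsS hs y hy
    have h1 := (h.eventually_exists_fixed ⟨hs.1, hs.2.le⟩ hsS).filter_mono
      (nhdsWithin_le_nhds (s := Ioi s))
    obtain ⟨t, ht, ht1⟩ :=
      (h1.and (Ioo_mem_nhdsGT (lt_min hy hs.2))).exists
    exact ⟨t, ht ⟨hs.1.trans ht1.1.le, (ht1.2.trans_le (min_le_right _ _)).le⟩, ht1.1,
      (ht1.2.trans_le (min_le_left _ _)).le⟩
  obtain ⟨s₀, hs₀S, hs₀, hs₀1⟩ :=
    hright 0 h.exists_fixed_zero ⟨le_rfl, one_pos⟩ 1 (mem_Ioi.2 one_pos)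
  exact (h.isClosed_fixed_params hs₀).Icc_subset_of_forall_exists_gt hs₀S
    (fun s hs => hright s hs.1 ⟨hs₀.le.trans hs.2.1, hs.2.2⟩) ⟨hs₀1, le_rfl⟩

theorem exists_isPosSol (h : Admissible L d τ ustar f H) : ∃ u v, IsPosSol L d τ f H u v := by
  obtain ⟨w, hw, hpos⟩ := h.exists_fixed_one
  obtain ⟨u, u', v, v', hu, hv, hsol, he⟩ := hw.exists_sol
  have hp : ∀ x ∈ Ioo 0 L, 0 < u x ∧ 0 < v x := fun x hx => by
    simpa [he] using hpos ⟨x, Ioo_subset_Icc_self hx⟩ hx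
  have hsecond : ∀ {φ p q : ℝ → ℝ}, TwiceDiffOn 0 L φ p q → ∀ x ∈ Ioo 0 L,
      deriv (deriv φ) x = q x := fun {φ p q} hφ x hx => by
    have : deriv φ =ᶠ[𝓝 x] p := by
      filter_upwards [isOpen_Ioo.mem_nhds hx] with y hy
      exact (hφ.deriv₁ y hy).deriv
    rw [this.deriv_eq]
    exact (hφ.deriv₂ x hx).deriv
  have hd := h.hd.ne'
  have hτ := h.hτ.ne'
  refine ⟨u, v, hu.contDiffOn, hv.contDiffOn, fun x hx => (hp x hx).1, fun x hx => (hp x hx).2,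
    fun x hx => ?_, fun x hx => ?_, hsol.u_left, hsol.u_right, hsol.v_left, hsol.v_right⟩
  · rw [hsecond hsol.diffu x hx]
    simp only [homGrowth]
    field_simp
    ring
  · rw [hsecond hsol.diffv x hx]
    simp only [homSource, homDecay]
    field_simp
    ring

end Admissible

/-- uniqueness and exact multiplicity for the 1D steady state system (52).
Under (A7)-type monotonicity, f(0,0) > 0 and condition (A4) for F(u,v) = u·f(u,v),
for each 0 < d < d* = f(0,0)L²/π², (52) has exactly one positive classical solution
(up to equality on [0,L]), which is non-degenerate, and for d ≥ d* it has none. -/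
theorem stmt14 (L τ : ℝ) (hL : 0 < L) (hτ : 0 < τ)
    (f : ℝ → ℝ → ℝ) (H : ℝ → ℝ)
    (hf : ContDiff ℝ 2 (Function.uncurry f))
    (hfu : ∀ p ≥ (0:ℝ), ∀ q ≥ (0:ℝ), deriv (fun s => f s q) p < 0)
    (hfv : ∀ p ≥ (0:ℝ), ∀ q ≥ (0:ℝ), deriv (f p) q < 0)
    (hf00 : 0 < f 0 0)
    (hH : ContDiff ℝ 2 H) (hH0 : H 0 = 0)
    (hH' : ∀ p ≥ (0:ℝ), 0 < deriv H p)
    -- condition (A4) for F(u,v) = u f(u,v)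
    (F₁ : ℝ → ℝ) (K₀ ustar : ℝ) (hK₀ : 0 < K₀) (hustar : 0 < ustar)
    (hF₁c : ContinuousOn F₁ (Ici 0))
    (hFle : ∀ p ≥ (0:ℝ), ∀ q ≥ (0:ℝ), p * f p q ≤ F₁ p * p)
    (hF₁star : F₁ ustar = 0)
    (hF₁pos : ∀ p : ℝ, 0 < p → p < ustar → 0 < F₁ p ∧ F₁ p < K₀)
    (hF₁neg : ∀ p : ℝ, ustar < p → F₁ p < 0) :
    (∀ d : ℝ, 0 < d → d < f 0 0 * L ^ 2 / π ^ 2 →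
      ∃ u v : ℝ → ℝ, IsPosSol L d τ f H u v ∧ NonDeg L d τ f H u v ∧
        ∀ u' v' : ℝ → ℝ, IsPosSol L d τ f H u' v' →
          (EqOn u' u (Icc 0 L) ∧ EqOn v' v (Icc 0 L))) ∧
    (∀ d : ℝ, f 0 0 * L ^ 2 / π ^ 2 ≤ d →
      ¬ ∃ u v : ℝ → ℝ, IsPosSol L d τ f H u v) := by
  constructor
  · intro d hd hlt
    have adm : Admissible L d τ ustar f H :=
      { hL := hL, hd := hd, hτ := hτ, hf := hf, hfu := hfu, hfv := hfv
        hH := hH, hH0 := hH0, hH' := hH'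
        lt_zero := by
          rw [lt_div_iff₀ (by positivity)] at hlt
          rwa [div_pow, mul_div_assoc', div_lt_iff₀ (by positivity)]
        neg := fun p hp q hq => by
          have hp0 : 0 < p := hustar.trans hp
          by_contra! hfp
          exact absurd (hFle p hp0.le q hq)
            (not_le.2 ((mul_neg_of_neg_of_pos (hF₁neg p hp) hp0).trans_le
              (mul_nonneg hp0.le hfp))) }
    obtain ⟨u, v, h⟩ := adm.exists_isPosSol
    exact ⟨u, v, h, h.nonDeg hL hd hτ hf hfu hfv hH hH',
      fun u' v' h' => h.unique hL hd hτ hf hfu hfv hH hH' h'⟩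
  · rintro d hle ⟨u, v, h⟩
    have hd : 0 < d := lt_of_lt_of_le (by positivity) hle
    exact absurd (h.lt_threshold hL hd hf hfu hfv) (not_lt.2 hle)
end
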